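/- arXiv:2009.06362 — 5 statements merged into one kernel-verified Lean document; each statement's English description precedes it below -/
import Mathlib

section
/- Divergence formula for the linearised operator (Lemma 3.1, identity (15)). Let Ω ⊆ ℝⁿ be a domain with n ≥ 3, let u ∈ C³(Ω), let H : Ω×ℝ×ℝⁿ → Sym_n(ℝ) be C¹, and let 2 ≤ k ≤ n. Then at every point of Ω and for every index j, Σ_i ∂_i(F[u]^{ij}) = Σ_{p=1}^{k−1} (−1)^{p+1} Σ_{a,b,c} T_{k−p−1}(A_H[u])_{ab} · (∂_a((H[u])_{cb}) − ∂_c((H[u])_{ab})) · ((A_H[u])^{p−1})_{cj}, where ∂_i denotes the i-th partial derivative of the indicated composite function of x and (A_H[u])^{p−1} is the (p−1)-st matrix power. -/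
open MeasureTheory Metric Set Matrix

noncomputable section

/-- The `k`-th elementary symmetric polynomial of the eigenvalues of an `n × n` real
matrix, defined via the coefficients of the characteristic polynomial. -/
def esymmMat {n : ℕ} (k : ℕ) (A : Matrix (Fin n) (Fin n) ℝ) : ℝ :=
  (-1 : ℝ) ^ k * A.charpoly.coeff (n - k)

/-- `λ(A) ∈ Γ_k^+`, i.e. `σ_j(A) > 0` for all `1 ≤ j ≤ k`. -/
def GammaPlus {n : ℕ} (k : ℕ) (A : Matrix (Fin n) (Fin n) ℝ) : Prop :=
  ∀ j : ℕ, 1 ≤ j → j ≤ k → 0 < esymmMat j A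

/-- The Newton tensors `T_0(A) = I`, `T_j(A) = σ_j(A) I - T_{j-1}(A) A`. -/
def newtonT {n : ℕ} : ℕ → Matrix (Fin n) (Fin n) ℝ → Matrix (Fin n) (Fin n) ℝ
  | 0, _ => 1
  | (j + 1), A => esymmMat (j + 1) A • (1 : Matrix (Fin n) (Fin n) ℝ) - newtonT j A * A

/-- `i`-th partial derivative. -/
def pd {n : ℕ} (i : Fin n) (w : (Fin n → ℝ) → ℝ) (x : Fin n → ℝ) : ℝ :=
  fderiv ℝ w x (Pi.single i 1)

/-- Gradient as a vector. -/
def grad {n : ℕ} (w : (Fin n → ℝ) → ℝ) (x : Fin n → ℝ) : Fin n → ℝ :=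
  fun i => pd i w x

/-- Hessian matrix. -/
def hess {n : ℕ} (w : (Fin n → ℝ) → ℝ) (x : Fin n → ℝ) : Matrix (Fin n) (Fin n) ℝ :=
  Matrix.of fun i j => pd i (pd j w) x

/-- Squared Euclidean norm of a vector. -/
def normSq {n : ℕ} (ξ : Fin n → ℝ) : ℝ := ∑ i, ξ i ^ 2

/-- Euclidean norm of a vector. -/
def vnorm {n : ℕ} (ξ : Fin n → ℝ) : ℝ := Real.sqrt (∑ i, ξ i ^ 2)

/-- Operator norm of a matrix, viewed as a linear map between Euclidean spaces. -/
def matNorm {n : ℕ} (M : Matrix (Fin n) (Fin n) ℝ) : ℝ :=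
  ‖LinearMap.toContinuousLinearMap (Matrix.toEuclideanLin M)‖

/-- Laplacian. -/
def lapl {n : ℕ} (w : (Fin n → ℝ) → ℝ) (x : Fin n → ℝ) : ℝ := ∑ l, pd l (pd l w) x

/-- `W^{2,p}` norm (with classical derivatives) on a set. -/
def W2pNorm {n : ℕ} (p : ℝ) (w : (Fin n → ℝ) → ℝ) (B : Set (Fin n → ℝ)) : ℝ :=
  (∫ x in B, (|w x| ^ p + vnorm (grad w x) ^ p + matNorm (hess w x) ^ p)) ^ (1 / p)

/-- `C^{1,1}_loc` on a set: continuously differentiable with locally Lipschitz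
first derivatives. -/
def C11On {E F : Type*} [NormedAddCommGroup E] [NormedSpace ℝ E]
    [NormedAddCommGroup F] [NormedSpace ℝ F] (f : E → F) (s : Set E) : Prop :=
  ContDiffOn ℝ 1 f s ∧
    ∀ x ∈ s, ∃ (K : NNReal) (t : Set E), t ∈ nhdsWithin x s ∧
      LipschitzOnWith K (fderivWithin ℝ f s) t

/-- First order difference quotient `∇_l^h`. -/
def dq {n : ℕ} (l : Fin n) (h : ℝ) (w : (Fin n → ℝ) → ℝ) (x : Fin n → ℝ) : ℝ :=
  (w (x + h • (Pi.single l 1 : Fin n → ℝ)) - w x) / h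

/-- Second order difference quotient `Δ_{ll}^h`. -/
def ddq {n : ℕ} (l : Fin n) (h : ℝ) (w : (Fin n → ℝ) → ℝ) (x : Fin n → ℝ) : ℝ :=
  (w (x + h • (Pi.single l 1 : Fin n → ℝ)) - 2 * w x + w (x - h • (Pi.single l 1 : Fin n → ℝ))) / h ^ 2

/-- `L^s` seminorm (as an extended real number) of a function on a set. -/
def lpN {n : ℕ} (s : ℝ) (w : (Fin n → ℝ) → ℝ) (S : Set (Fin n → ℝ)) : ENNReal :=
  (∫⁻ x in S, ENNReal.ofReal (|w x| ^ s)) ^ (1 / s)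

end

section DivHelpers

open Polynomial

/-- A family `f` of polynomials has, coefficientwise, derivative `g` at `x` in direction `v`. -/
def HasCoeffDeriv {n : ℕ} (x v : Fin n → ℝ) (f : (Fin n → ℝ) → ℝ[X]) (g : ℝ[X]) : Prop :=
  ∀ i, DifferentiableAt ℝ (fun y => (f y).coeff i) x ∧
    fderiv ℝ (fun y => (f y).coeff i) x v = g.coeff i

lemma HasCoeffDeriv.const {n : ℕ} {x v : Fin n → ℝ} (p : ℝ[X]) :
    HasCoeffDeriv x v (fun _ => p) 0 := by
  intro i
  simp

lemma HasCoeffDeriv.C {n : ℕ} {x v : Fin n → ℝ} {a : (Fin n → ℝ) → ℝ}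
    (ha : DifferentiableAt ℝ a x) :
    HasCoeffDeriv x v (fun y => Polynomial.C (a y)) (Polynomial.C (fderiv ℝ a x v)) := by
  intro i
  by_cases h : i = 0
  · subst h
    simpa using ha
  · simp [coeff_C, h]

lemma HasCoeffDeriv.sub {n : ℕ} {x v : Fin n → ℝ} {f g : (Fin n → ℝ) → ℝ[X]} {f' g' : ℝ[X]}
    (hf : HasCoeffDeriv x v f f') (hg : HasCoeffDeriv x v g g') :
    HasCoeffDeriv x v (fun y => f y - g y) (f' - g') := by
  intro i
  simp only [coeff_sub]
  refine ⟨(hf i).1.fun_sub (hg i).1, ?_⟩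
  rw [fderiv_fun_sub (hf i).1 (hg i).1, ← (hf i).2, ← (hg i).2]
  rfl

lemma HasCoeffDeriv.sum {n : ℕ} {x v : Fin n → ℝ} {ι : Type*} (s : Finset ι)
    {f : ι → (Fin n → ℝ) → ℝ[X]} {f' : ι → ℝ[X]}
    (hf : ∀ a ∈ s, HasCoeffDeriv x v (f a) (f' a)) :
    HasCoeffDeriv x v (fun y => ∑ a ∈ s, f a y) (∑ a ∈ s, f' a) := by
  intro i
  simp only [finsetSum_coeff]
  refine ⟨DifferentiableAt.fun_sum fun a ha => (hf a ha i).1, ?_⟩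
  rw [fderiv_fun_sum fun a ha => (hf a ha i).1]
  rw [_root_.sum_apply]
  exact Finset.sum_congr rfl fun a ha => (hf a ha i).2

lemma HasCoeffDeriv.mul {n : ℕ} {x v : Fin n → ℝ} {f g : (Fin n → ℝ) → ℝ[X]} {f' g' : ℝ[X]}
    (hf : HasCoeffDeriv x v f f') (hg : HasCoeffDeriv x v g g') :
    HasCoeffDeriv x v (fun y => f y * g y) (f' * g x + f x * g') := by
  intro i
  simp only [coeff_mul, coeff_add]
  have h : ∀ p ∈ Finset.HasAntidiagonal.antidiagonal i,
      DifferentiableAt ℝ (fun y => (f y).coeff p.1 * (g y).coeff p.2) x :=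
    fun p _ => (hf p.1).1.fun_mul (hg p.2).1
  refine ⟨DifferentiableAt.fun_sum h, ?_⟩
  rw [fderiv_fun_sum h, _root_.sum_apply, ← Finset.sum_add_distrib]
  refine Finset.sum_congr rfl fun p _ => ?_
  rw [fderiv_fun_mul (hf p.1).1 (hg p.2).1, ← (hf p.1).2, ← (hg p.2).2]
  simp only [_root_.add_apply, _root_.smul_apply, smul_eq_mul]
  ring

lemma HasCoeffDeriv.prod {n : ℕ} {x v : Fin n → ℝ} {ι : Type*} [DecidableEq ι] (s : Finset ι)
    {f : ι → (Fin n → ℝ) → ℝ[X]} {f' : ι → ℝ[X]}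
    (hf : ∀ a ∈ s, HasCoeffDeriv x v (f a) (f' a)) :
    HasCoeffDeriv x v (fun y => ∏ a ∈ s, f a y)
      (∑ a ∈ s, ∏ b ∈ s, if b = a then f' b else f b x) := by
  induction s using Finset.induction_on with
  | empty => simpa using HasCoeffDeriv.const (x := x) (v := v) (1 : ℝ[X])
  | insert a s ha ih =>
    have h1 := (hf a (Finset.mem_insert_self a s)).mul
      (ih fun b hb => hf b (Finset.mem_insert_of_mem hb))
    simp only [Finset.prod_insert ha, Finset.sum_insert ha]
    convert h1 using 1
    congr 1
    · rw [if_pos trivial]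
      congr 1
      refine Finset.prod_congr rfl fun b hb => ?_
      rw [if_neg]
      rintro rfl
      exact ha hb
    · rw [Finset.mul_sum]
      refine Finset.sum_congr rfl fun b hb => ?_
      rw [if_neg]
      rintro rfl
      exact ha hb

/-- The Jacobi formula, coefficientwise. -/
lemma HasCoeffDeriv.det {n : ℕ} {x v : Fin n → ℝ}
    {M : (Fin n → ℝ) → Matrix (Fin n) (Fin n) ℝ[X]} {M' : Matrix (Fin n) (Fin n) ℝ[X]}
    (hM : ∀ a b, HasCoeffDeriv x v (fun y => M y a b) (M' a b)) :
    HasCoeffDeriv x v (fun y => (M y).det) (∑ a, ∑ b, (M x).adjugate a b * M' b a) := by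
  have h : HasCoeffDeriv x v (fun y => ∑ σ : Equiv.Perm (Fin n),
      ((Equiv.Perm.sign σ : ℤ) : ℝ[X]) * ∏ i, M y (σ i) i) _ :=
    HasCoeffDeriv.sum Finset.univ fun σ _ =>
      (HasCoeffDeriv.const (x := x) (v := v) _).mul
        (HasCoeffDeriv.prod Finset.univ fun a _ => hM (σ a) a)
  simp only [← Matrix.det_apply'] at h
  convert h using 1
  simp only [zero_mul, zero_add, Finset.mul_sum]
  symm
  rw [Finset.sum_comm]
  refine Finset.sum_congr rfl fun a _ => ?_
  symm
  have h2 : ∑ b, (M x).adjugate a b * M' b a = ((M x).updateCol a (fun b => M' b a)).det := by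
    rw [← Matrix.cramer_apply, Matrix.cramer_eq_adjugate_mulVec]
    rfl
  rw [h2, Matrix.det_apply']
  refine Finset.sum_congr rfl fun σ _ => ?_
  congr 1
  refine Finset.prod_congr rfl fun b _ => ?_
  by_cases hb : b = a
  · subst hb; simp
  · simp [Matrix.updateCol_ne, hb]

/-- Coefficient matrices of the adjugate of the characteristic matrix. -/
noncomputable def adjCoeff {n : ℕ} (A : Matrix (Fin n) (Fin n) ℝ) (j : ℕ) : Matrix (Fin n) (Fin n) ℝ :=
  Matrix.of fun a b => (A.charmatrix.adjugate a b).coeff j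

lemma adjCoeff_rec {n : ℕ} (A : Matrix (Fin n) (Fin n) ℝ) (j : ℕ) :
    adjCoeff A j = A.charpoly.coeff (j + 1) • (1 : Matrix (Fin n) (Fin n) ℝ)
      + adjCoeff A (j + 1) * A := by
  ext a b
  have h := congrFun (congrFun (Matrix.adjugate_mul A.charmatrix) a) b
  rw [Matrix.mul_apply] at h
  simp only [Matrix.charmatrix_apply, mul_sub, Finset.sum_sub_distrib, Matrix.diagonal_apply,
    mul_ite, mul_zero, Finset.sum_ite_eq', Finset.mem_univ, if_true] at h
  have h3 := congrArg (fun p : ℝ[X] => p.coeff (j + 1)) h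
  simp only [coeff_sub, coeff_mul_X, finsetSum_coeff, coeff_mul_C, Matrix.smul_apply,
    smul_eq_mul, Matrix.one_apply] at h3
  simp only [adjCoeff, Matrix.of_apply, Matrix.add_apply, Matrix.smul_apply, Matrix.mul_apply,
    smul_eq_mul, Matrix.one_apply]
  have h4 : (A.charmatrix.det * (if a = b then 1 else 0)).coeff (j + 1)
      = A.charpoly.coeff (j + 1) * (if a = b then 1 else 0) := by
    split_ifs <;> simp [Matrix.charpoly]
  rw [h4] at h3
  linarith

lemma adjCoeff_zero {n : ℕ} (A : Matrix (Fin n) (Fin n) ℝ) : adjCoeff A n = 0 := by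
  obtain ⟨N, hN⟩ : ∃ N, ∀ j, N ≤ j → adjCoeff A j = 0 := by
    refine ⟨(∑ a, ∑ b, (A.charmatrix.adjugate a b).natDegree) + 1, fun j hj => ?_⟩
    ext a b
    change (A.charmatrix.adjugate a b).coeff j = 0
    refine coeff_eq_zero_of_natDegree_lt ?_
    have h1 : (A.charmatrix.adjugate a b).natDegree
        ≤ ∑ b, (A.charmatrix.adjugate a b).natDegree :=
      Finset.single_le_sum (f := fun b => (A.charmatrix.adjugate a b).natDegree)
        (fun _ _ => Nat.zero_le _) (Finset.mem_univ b)
    have h2 : ∑ b, (A.charmatrix.adjugate a b).natDegree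
        ≤ ∑ a, ∑ b, (A.charmatrix.adjugate a b).natDegree :=
      Finset.single_le_sum (f := fun a => ∑ b, (A.charmatrix.adjugate a b).natDegree)
        (fun _ _ => Nat.zero_le _) (Finset.mem_univ a)
    omega
  have key : ∀ m j, n ≤ j → N ≤ j + m → adjCoeff A j = 0 := by
    intro m
    induction m with
    | zero => intro j _ h; exact hN j h
    | succ m ih =>
      intro j hj h
      rw [adjCoeff_rec, ih (j + 1) (by omega) (by omega), coeff_eq_zero_of_natDegree_lt]
      · simp
      · rw [Matrix.charpoly_natDegree_eq_dim, Fintype.card_fin]; omega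
  exact key N n le_rfl (by omega)

lemma adjCoeff_eq_newtonT {n : ℕ} (A : Matrix (Fin n) (Fin n) ℝ) (i : ℕ) (hi : i + 1 ≤ n) :
    adjCoeff A (n - (i + 1)) = (-1 : ℝ) ^ i • newtonT i A := by
  induction i with
  | zero =>
    rw [adjCoeff_rec, show n - (0 + 1) + 1 = n by omega, adjCoeff_zero]
    have h : A.charpoly.coeff n = 1 := by
      have := A.charpoly_monic
      rw [Monic, leadingCoeff, Matrix.charpoly_natDegree_eq_dim, Fintype.card_fin] at this
      exact this
    simp [h, newtonT]
  | succ i ih =>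
    rw [adjCoeff_rec, show n - (i + 1 + 1) + 1 = n - (i + 1) by omega, ih (by omega)]
    have h : (-1 : ℝ) ^ (i + 1) * (-1) ^ (i + 1) = 1 := by
      rw [← mul_pow]; simp
    simp only [newtonT, esymmMat, smul_sub, smul_smul]
    rw [← mul_assoc, h, one_mul, Matrix.smul_mul, sub_eq_add_neg, ← neg_smul, pow_succ]
    simp

lemma esymmMat_deriv {n : ℕ} {x v : Fin n → ℝ} {A : (Fin n → ℝ) → Matrix (Fin n) (Fin n) ℝ}
    (hA : ∀ a b, DifferentiableAt ℝ (fun y => A y a b) x) (m : ℕ) (hm : m + 1 ≤ n) :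
    DifferentiableAt ℝ (fun y => esymmMat (m + 1) (A y)) x ∧
    fderiv ℝ (fun y => esymmMat (m + 1) (A y)) x v
      = ∑ a, ∑ b, newtonT m (A x) a b * fderiv ℝ (fun y => A y b a) x v := by
  have h := HasCoeffDeriv.det (x := x) (v := v) (M := fun y => (A y).charmatrix)
    (M' := fun a b => 0 - Polynomial.C (fderiv ℝ (fun y => A y a b) x v)) (by
      intro a b
      simp only [Matrix.charmatrix_apply]
      exact (HasCoeffDeriv.const _).sub (HasCoeffDeriv.C (hA a b)))
  obtain ⟨h1, h2⟩ := h (n - (m + 1))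
  simp only [esymmMat, Matrix.charpoly]
  refine ⟨h1.const_mul _, ?_⟩
  rw [fderiv_const_mul h1, _root_.smul_apply, h2, smul_eq_mul]
  simp only [finsetSum_coeff, zero_sub, mul_neg, coeff_neg, coeff_mul_C, Finset.mul_sum]
  refine Finset.sum_congr rfl fun a _ => Finset.sum_congr rfl fun b _ => ?_
  have h3 : ((A x).charmatrix.adjugate a b).coeff (n - (m + 1))
      = (-1 : ℝ) ^ m * newtonT m (A x) a b :=
    congrFun (congrFun (adjCoeff_eq_newtonT (A x) m hm) a) b
  have h : (-1 : ℝ) ^ m * (-1) ^ m = 1 := by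
    rw [← mul_pow]; simp
  rw [h3, pow_succ]
  linear_combination (newtonT m (A x) a b * fderiv ℝ (fun y => A y b a) x v) * h

lemma newtonT_diff {n : ℕ} {x : Fin n → ℝ} {A : (Fin n → ℝ) → Matrix (Fin n) (Fin n) ℝ}
    (hA : ∀ a b, DifferentiableAt ℝ (fun y => A y a b) x) (m : ℕ) (hm : m ≤ n) (a b : Fin n) :
    DifferentiableAt ℝ (fun y => newtonT m (A y) a b) x := by
  induction m generalizing a b with
  | zero => simp [newtonT]
  | succ m ih =>
    simp only [newtonT, Matrix.sub_apply, Matrix.smul_apply, smul_eq_mul, Matrix.mul_apply]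
    refine DifferentiableAt.fun_sub ((esymmMat_deriv (v := 0) hA m hm).1.mul_const _) ?_
    exact DifferentiableAt.fun_sum fun c _ => (ih (by omega) a c).fun_mul (hA c b)

/-- The one-step recursion for the divergence of the Newton tensors. -/
lemma newtonT_div_succ {n : ℕ} {x : Fin n → ℝ} {A : (Fin n → ℝ) → Matrix (Fin n) (Fin n) ℝ}
    (hA : ∀ a b, DifferentiableAt ℝ (fun y => A y a b) x) (m : ℕ) (hm : m + 1 ≤ n) (j : Fin n) :
    ∑ i, pd i (fun y => newtonT (m + 1) (A y) i j) x
      = ∑ a, ∑ b, newtonT m (A x) a b *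
          (pd j (fun y => A y b a) x - pd a (fun y => A y b j) x)
        - ∑ c, (∑ i, pd i (fun y => newtonT m (A y) i c) x) * A x c j := by
  have hT := newtonT_diff hA m (by omega)
  have h1 : ∀ i, pd i (fun y => newtonT (m + 1) (A y) i j) x
      = pd i (fun y => esymmMat (m + 1) (A y)) x * (1 : Matrix (Fin n) (Fin n) ℝ) i j
        - ∑ c, (newtonT m (A x) i c * pd i (fun y => A y c j) x
          + pd i (fun y => newtonT m (A y) i c) x * A x c j) := by
    intro i
    have hs := (esymmMat_deriv (v := 0) hA m hm).1
    have hp : ∀ c ∈ Finset.univ, DifferentiableAt ℝ (fun y => newtonT m (A y) i c * A y c j) x :=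
      fun c _ => (hT i c).fun_mul (hA c j)
    simp only [pd, newtonT, Matrix.sub_apply, Matrix.smul_apply, smul_eq_mul, Matrix.mul_apply]
    rw [fderiv_fun_sub (hs.mul_const _) (DifferentiableAt.fun_sum hp), fderiv_mul_const hs,
      fderiv_fun_sum hp, _root_.sub_apply, _root_.sum_apply,
      _root_.smul_apply, smul_eq_mul, mul_comm]
    congr 1
    refine Finset.sum_congr rfl fun c _ => ?_
    rw [fderiv_fun_mul (hT i c) (hA c j)]
    simp only [_root_.add_apply, _root_.smul_apply, smul_eq_mul]
    ring
  have h2 : pd j (fun y => esymmMat (m + 1) (A y)) x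
      = ∑ a, ∑ b, newtonT m (A x) a b * pd j (fun y => A y b a) x :=
    (esymmMat_deriv hA m hm).2
  simp only [h1, Finset.sum_sub_distrib, Finset.sum_add_distrib, Matrix.one_apply, mul_ite,
    mul_one, mul_zero, Finset.sum_ite_eq', Finset.mem_univ, if_true, h2, mul_sub, Finset.sum_mul]
  rw [Finset.sum_comm (f := fun i c => pd i (fun y => newtonT m (A y) i c) x * A x c j)]
  ring

lemma newtonT_div {n : ℕ} {x : Fin n → ℝ} {A : (Fin n → ℝ) → Matrix (Fin n) (Fin n) ℝ}
    (hA : ∀ a b, DifferentiableAt ℝ (fun y => A y a b) x) (m : ℕ) (hm : m ≤ n) (j : Fin n) :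
    ∑ i, pd i (fun y => newtonT m (A y) i j) x
      = ∑ p ∈ Finset.range m, (-1 : ℝ) ^ p * ∑ a, ∑ b, ∑ c, newtonT (m - 1 - p) (A x) a b *
          (pd c (fun y => A y b a) x - pd a (fun y => A y b c) x) * (A x ^ p) c j := by
  induction m generalizing j with
  | zero => simp [newtonT, pd]
  | succ m ih =>
    rw [newtonT_div_succ hA m hm j, Finset.sum_range_succ']
    refine (sub_eq_add_neg _ _).trans
      ((congrArg₂ (fun s t : ℝ => s + t) ?_ ?_).trans (add_comm _ _))
    rotate_left
    · simp only [ih (by omega), Finset.sum_mul]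
      rw [Finset.sum_comm, ← Finset.sum_neg_distrib]
      refine Finset.sum_congr rfl fun p _ => ?_
      rw [pow_succ, show m + 1 - 1 - (p + 1) = m - 1 - p by omega]
      simp only [mul_assoc, ← Finset.mul_sum]
      rw [← mul_neg, neg_one_mul]
      congr 2
      simp only [Finset.sum_mul]
      rw [Finset.sum_comm]
      refine Finset.sum_congr rfl fun a _ => ?_
      rw [Finset.sum_comm]
      refine Finset.sum_congr rfl fun b _ => ?_
      simp only [Finset.mul_sum, Finset.sum_mul]
      rw [Finset.sum_comm]
      refine Finset.sum_congr rfl fun c _ => ?_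
      rw [pow_succ, Matrix.mul_apply]
      simp only [Finset.mul_sum, mul_assoc]
    · simp only [pow_zero, one_mul, Matrix.one_apply, mul_ite, mul_one, mul_zero,
        Finset.sum_ite_eq', Finset.mem_univ, if_true]
      rfl

lemma pd_contDiffAt {n : ℕ} {w : (Fin n → ℝ) → ℝ} {x : Fin n → ℝ} {s t : WithTop ℕ∞}
    (hw : ContDiffAt ℝ s w x) (h : t + 1 ≤ s) (i : Fin n) : ContDiffAt ℝ t (pd i w) x := by
  unfold pd
  exact (hw.fderiv_right h).clm_apply contDiffAt_const

lemma pd_comm {n : ℕ} {w : (Fin n → ℝ) → ℝ} {x : Fin n → ℝ}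
    (hw : ContDiffAt ℝ 2 w x) (i j : Fin n) : pd i (pd j w) x = pd j (pd i w) x := by
  have hd : DifferentiableAt ℝ (fderiv ℝ w) x :=
    (hw.fderiv_right (m := 1) (by norm_num)).differentiableAt (by norm_num)
  have h := hw.isSymmSndFDerivAt (by simp)
  have e : ∀ i j : Fin n, pd i (pd j w) x
      = fderiv ℝ (fderiv ℝ w) x (Pi.single i 1) (Pi.single j 1) := by
    intro i j
    have : pd j w = fun y => fderiv ℝ w y (Pi.single j 1) := rfl
    rw [this, pd, fderiv_clm_apply hd (by fun_prop)]
    simp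
  rw [e, e]
  exact h _ _

end DivHelpers

/-- Divergence formula for the linearised operator
(Lemma 3.1, identity (15)). -/
theorem divergence_formula_linearised_operator
    {n : ℕ} (hn : 3 ≤ n) (k : ℕ) (hk2 : 2 ≤ k) (hkn : k ≤ n)
    (Ω : Set (Fin n → ℝ)) (hΩ : IsOpen Ω)
    (u : (Fin n → ℝ) → ℝ) (hu : ContDiffOn ℝ 3 u Ω)
    (H : ((Fin n → ℝ) × ℝ × (Fin n → ℝ)) → Matrix (Fin n) (Fin n) ℝ)
    (hH : ∀ i j : Fin n,
      ContDiffOn ℝ 1 (fun y => H y i j) (Ω ×ˢ ((univ : Set ℝ) ×ˢ (univ : Set (Fin n → ℝ)))))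
    (hHsymm : ∀ y ∈ Ω ×ˢ ((univ : Set ℝ) ×ˢ (univ : Set (Fin n → ℝ))), (H y).IsSymm) :
    ∀ x ∈ Ω, ∀ j : Fin n,
      ∑ i, pd i (fun y => newtonT (k - 1) (hess u y - H (y, u y, grad u y)) i j) x
        = ∑ p ∈ Finset.Icc 1 (k - 1), (-1 : ℝ) ^ (p + 1) *
            ∑ a, ∑ b, ∑ c,
              newtonT (k - p - 1) (hess u x - H (x, u x, grad u x)) a b *
                (pd a (fun y => H (y, u y, grad u y) c b) x
                  - pd c (fun y => H (y, u y, grad u y) a b) x) *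
                ((hess u x - H (x, u x, grad u x)) ^ (p - 1)) c j := by
  intro x hx j
  have huA : ∀ y ∈ Ω, ContDiffAt ℝ 3 u y := fun y hy => hu.contDiffAt (hΩ.mem_nhds hy)
  have hnear : ∀ᶠ y in nhds x, y ∈ Ω := hΩ.mem_nhds hx
  have hgrad : ContDiffAt ℝ 1 (fun y => grad u y) x := by
    rw [contDiffAt_pi]
    intro i
    exact pd_contDiffAt ((huA x hx).of_le (by norm_num : (2 : WithTop ℕ∞) ≤ 3)) (by norm_num) i
  have hHd : ∀ a b, DifferentiableAt ℝ (fun y => H (y, u y, grad u y) a b) x := by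
    intro a b
    have h1 : ContDiffAt ℝ 1 (fun z => H z a b) (x, u x, grad u x) :=
      (hH a b).contDiffAt ((hΩ.prod (isOpen_univ.prod isOpen_univ)).mem_nhds
        ⟨hx, mem_univ _, mem_univ _⟩)
    have h2 : ContDiffAt ℝ 1 (fun y => (y, u y, grad u y)) x :=
      contDiffAt_id.prodMk (((huA x hx).of_le (by norm_num)).prodMk hgrad)
    exact (ContDiffAt.comp x h1 h2).differentiableAt (by norm_num)
  have hhd : ∀ a b, DifferentiableAt ℝ (fun y => pd a (pd b u) y) x := by
    intro a b
    exact (pd_contDiffAt (t := 1) (pd_contDiffAt (t := 2) (huA x hx) (by norm_num) b)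
      (by norm_num) a).differentiableAt (by norm_num)
  have hA : ∀ a b, DifferentiableAt ℝ
      (fun y => (hess u y - H (y, u y, grad u y)) a b) x :=
    fun a b => (hhd a b).fun_sub (hHd a b)
  have hpd : ∀ i a b, pd i (fun y => (hess u y - H (y, u y, grad u y)) a b) x
      = pd i (pd a (pd b u)) x - pd i (fun y => H (y, u y, grad u y) a b) x := by
    intro i a b
    have : (fun y => (hess u y - H (y, u y, grad u y)) a b)
      = fun y => pd a (pd b u) y - H (y, u y, grad u y) a b := rfl
    rw [this, pd, fderiv_fun_sub (hhd a b) (hHd a b)]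
    rfl
  have hswap : ∀ i a b, pd i (pd a (pd b u)) x = pd i (pd b (pd a u)) x := by
    intro i a b
    have : pd a (pd b u) =ᶠ[nhds x] pd b (pd a u) := by
      filter_upwards [hnear] with y hy
      exact pd_comm ((huA y hy).of_le (by norm_num)) a b
    rw [pd, this.fderiv_eq]
    rfl
  have hswap2 : ∀ i a b, pd i (pd a (pd b u)) x = pd a (pd i (pd b u)) x := by
    intro i a b
    exact pd_comm (pd_contDiffAt (huA x hx) (by norm_num) b) i a
  have hHs : ∀ i a b, pd i (fun y => H (y, u y, grad u y) a b) x
      = pd i (fun y => H (y, u y, grad u y) b a) x := by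
    intro i a b
    have : (fun y => H (y, u y, grad u y) a b) =ᶠ[nhds x]
        (fun y => H (y, u y, grad u y) b a) := by
      filter_upwards [hnear] with y hy
      exact (hHsymm (y, u y, grad u y) ⟨hy, mem_univ _, mem_univ _⟩).apply b a
    rw [pd, this.fderiv_eq]
    rfl
  have main := newtonT_div (A := fun y => hess u y - H (y, u y, grad u y)) hA (k - 1)
    (by omega) j
  rw [main, Finset.range_eq_Ico, Finset.sum_Ico_eq_sum_range,
    show Finset.Icc 1 (k - 1) = Finset.Ico 1 k by ext; simp; omega,
    Finset.sum_Ico_eq_sum_range]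
  refine Finset.sum_congr rfl fun p _ => ?_
  rw [show (-1 : ℝ) ^ (1 + p + 1) = (-1) ^ (0 + p) by ring,
    show k - (1 + p) - 1 = k - 1 - 1 - (0 + p) by omega, show 1 + p - 1 = 0 + p by omega]
  congr 1
  refine Finset.sum_congr rfl fun a _ => Finset.sum_congr rfl fun b _ =>
    Finset.sum_congr rfl fun c _ => ?_
  congr 2
  rw [hpd, hpd, hswap c b a, hswap2 c a b, hswap a c b, hHs c b a, hHs a b c]
  ring
end

section
/- Newton–Maclaurin-type matrix inequality (inequality (20) in the proof of Lemma 4.3). Let n ≥ 1, let 1 ≤ k ≤ n, and let A be an n×n real symmetric matrix with λ(A) ∈ Γ_k^+. Then tr(A) > 0, σ_k(A) > 0, and the symmetric matrix tr(A)·T_{k−1}(A) − σ_k(A)·I is positive semidefinite; equivalently, T_{k−1}(A)/σ_k(A) ≥ I/tr(A) in the sense of quadratic forms. -/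
open MeasureTheory Metric Set Matrix

open Polynomial in
lemma nm_splits_derivative (p : ℝ[X]) (hp : p.Splits) : (derivative p).Splits := by
  have h1 := Polynomial.card_roots_le_derivative p
  have h2 := Polynomial.splits_iff_card_roots.1 hp
  have h3 := Polynomial.natDegree_derivative_le p
  have h4 := Polynomial.card_roots' (derivative p)
  by_cases h0 : p.natDegree = 0
  · rw [Polynomial.natDegree_eq_zero] at h0
    obtain ⟨c, rfl⟩ := h0
    simp
  · apply Polynomial.splits_iff_card_roots.2
    omega

open Polynomial in
lemma nm_splits_iterate (p : ℝ[X]) (hp : p.Splits) (m : ℕ) : (derivative^[m] p).Splits := by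
  induction m with
  | zero => simpa
  | succ m ih =>
    rw [Function.iterate_succ_apply']
    exact nm_splits_derivative _ ih

open Polynomial in
lemma nm_laguerre_prod (s : Multiset ℝ) (x : ℝ) :
    let p := (s.map (fun r => X - C r)).prod
    0 ≤ (derivative p).eval x ^ 2 - p.eval x * (derivative (derivative p)).eval x := by
  induction s using Multiset.induction_on with
  | empty => simp
  | cons r s ih =>
    simp only [Multiset.map_cons, Multiset.prod_cons] at ih ⊢
    set q := (s.map (fun r => X - C r)).prod
    simp only [derivative_mul, derivative_add, derivative_sub, derivative_X, derivative_C,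
      eval_add, eval_mul, eval_sub, eval_X, eval_C, sub_zero, one_mul]
    nlinarith [sq_nonneg (q.eval x), mul_nonneg (sq_nonneg (x - r)) ih]

open Polynomial in
lemma nm_laguerre (p : ℝ[X]) (hp : p.Splits) (x : ℝ) :
    0 ≤ (derivative p).eval x ^ 2 - p.eval x * (derivative (derivative p)).eval x := by
  have h := nm_laguerre_prod p.roots x
  have h2 := hp.eq_prod_roots
  set q := (p.roots.map (fun r => X - C r)).prod with hq
  rw [h2]
  simp only [derivative_C_mul, eval_mul, eval_C]
  simp only at h
  nlinarith [mul_nonneg (sq_nonneg p.leadingCoeff) h]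

open Polynomial in
lemma nm_newton_coeff (p : ℝ[X]) (hp : p.Splits) (m : ℕ) :
    p.coeff m * p.coeff (m + 2) ≤ p.coeff (m + 1) ^ 2 := by
  have h := nm_laguerre _ (nm_splits_iterate p hp m) 0
  rw [← Function.iterate_succ_apply' derivative, ← Function.iterate_succ_apply' derivative] at h
  simp only [← coeff_zero_eq_eval_zero, coeff_iterate_derivative, zero_add, nsmul_eq_mul,
    Nat.descFactorial_self, Nat.succ_eq_add_one, Nat.factorial_succ] at h
  push_cast at h
  have hf : (0 : ℝ) < (m.factorial : ℝ) := by positivity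
  have hm : (0 : ℝ) ≤ (m : ℝ) := by positivity
  have h' : 0 ≤ ((m.factorial : ℝ) ^ 2 * (m + 1)) *
      ((m + 1) * p.coeff (m + 1) ^ 2 - (m + 2) * (p.coeff m * p.coeff (m + 2))) := by
    convert h using 1
    ring_nf
  have h'' := nonneg_of_mul_nonneg_right h' (by positivity)
  by_contra hc
  push Not at hc
  nlinarith [sq_nonneg (p.coeff (m + 1))]

lemma nm_esymm_zero_of_card_lt (s : Multiset ℝ) (j : ℕ) (h : s.card < j) : s.esymm j = 0 := by
  simp [Multiset.esymm, Multiset.powersetCard_eq_empty _ h]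

lemma nm_newton_esymm (s : Multiset ℝ) (j : ℕ) :
    s.esymm j * s.esymm (j + 2) ≤ s.esymm (j + 1) ^ 2 := by
  by_cases h : s.card < j + 2
  · rw [nm_esymm_zero_of_card_lt s _ h]
    simpa using sq_nonneg _
  · push Not at h
    obtain ⟨m, hm⟩ := Nat.exists_eq_add_of_le h
    have hs : ((s.map fun r => Polynomial.X + Polynomial.C r).prod).Splits := by
      apply Polynomial.Splits.multisetProd
      intro f hf
      obtain ⟨r, -, rfl⟩ := Multiset.mem_map.1 hf
      exact Polynomial.Splits.X_add_C r
    have := nm_newton_coeff _ hs m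
    rw [Multiset.prod_X_add_C_coeff _ (by omega), Multiset.prod_X_add_C_coeff _ (by omega),
      Multiset.prod_X_add_C_coeff _ (by omega)] at this
    rw [show s.card - m = j + 2 by omega, show s.card - (m + 1) = j + 1 by omega,
      show s.card - (m + 2) = j by omega] at this
    linarith

lemma nm_esymm_cons (a : ℝ) (s : Multiset ℝ) (j : ℕ) :
    (a ::ₘ s).esymm (j + 1) = s.esymm (j + 1) + a * s.esymm j := by
  simp [Multiset.esymm, Multiset.powersetCard_cons, Multiset.map_map, 
    Multiset.sum_map_mul_left]

/-- Deleting a variable maps `Γ_k` to `Γ_{k-1}`. -/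
lemma nm_gamma_drop (e s : ℕ → ℝ) (x : ℝ) (k : ℕ) (h0 : s 0 = 1)
    (hes : ∀ j, e (j + 1) = s (j + 1) + x * s j)
    (hN : ∀ j, s j * s (j + 2) ≤ s (j + 1) ^ 2)
    (he : ∀ j, 1 ≤ j → j ≤ k → 0 < e j) : ∀ j, j + 1 ≤ k → 0 < s j := by
  intro j
  induction j with
  | zero => intro _; simp [h0]
  | succ j ih =>
    intro hj
    have hsj := ih (by omega)
    by_contra hc
    push Not at hc
    have h1 := he (j + 1) (by omega) (by omega)
    have h2 := he (j + 2) (by omega) (by omega)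
    rw [hes] at h1 h2
    have h3 := hN j
    nlinarith [mul_pos hsj h2, mul_nonneg (neg_nonneg.2 hc) h1.le]

lemma nm_main_ineq (s : ℕ → ℝ) (k : ℕ) (h0 : s 0 = 1)
    (hN : ∀ j, s j * s (j + 2) ≤ s (j + 1) ^ 2)
    (hs : ∀ j, j ≤ k → 0 < s j) : s (k + 1) ≤ s 1 * s k := by
  induction k with
  | zero => simp [h0]
  | succ k ih =>
    have h1 := ih (fun j hj => hs j (by omega))
    have hk := hs k (by omega)
    have hk1 := hs (k + 1) (by omega)
    have h2 := hN k
    have : s k * s (k + 2) ≤ s k * (s 1 * s (k + 1)) := by nlinarith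
    exact le_of_mul_le_mul_left this hk

lemma nm_esymmMat_eq {n : ℕ} (A : Matrix (Fin n) (Fin n) ℝ) (hA : A.IsHermitian) (j : ℕ)
    (hj : j ≤ n) :
    esymmMat j A = ((Finset.univ : Finset (Fin n)).val.map hA.eigenvalues).esymm j := by
  have hc : A.charpoly = (((Finset.univ : Finset (Fin n)).val.map hA.eigenvalues).map
      (fun r => Polynomial.X - Polynomial.C r)).prod := by
    rw [hA.charpoly_eq, Multiset.map_map]
    rfl
  unfold esymmMat
  rw [hc, Multiset.prod_X_sub_C_coeff _ (by simp)]
  simp only [Multiset.card_map, Finset.card_val, Finset.card_univ, Fintype.card_fin]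
  rw [show n - (n - j) = j by omega, ← mul_assoc, ← mul_pow]
  simp

lemma nm_newtonT_eq {n : ℕ} (A : Matrix (Fin n) (Fin n) ℝ) (U D : Matrix (Fin n) (Fin n) ℝ)
    (d : Fin n → ℝ) (s : Fin n → ℕ → ℝ) (hD : D = Matrix.diagonal d)
    (hU1 : U * star U = 1) (hU2 : star U * U = 1) (hA : A = U * D * star U)
    (k : ℕ) (h0 : ∀ i, s i 0 = 1)
    (hes : ∀ i j, j + 1 ≤ k → esymmMat (j + 1) A = s i (j + 1) + d i * s i j) :
    ∀ j, j ≤ k → newtonT j A = U * Matrix.diagonal (fun i => s i j) * star U := by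
  intro j
  induction j with
  | zero => intro _; simp [newtonT, h0, hU1]
  | succ j ih =>
    intro hj
    have h1 : Matrix.diagonal (fun i => s i (j + 1)) =
        esymmMat (j + 1) A • (1 : Matrix (Fin n) (Fin n) ℝ) -
          Matrix.diagonal (fun i => s i j) * D := by
      rw [hD, Matrix.diagonal_mul_diagonal, Matrix.smul_one_eq_diagonal, Matrix.diagonal_sub]
      congr 1
      funext i
      rw [hes i j hj]
      ring
    rw [newtonT, ih (by omega), h1, mul_sub, sub_mul, mul_smul_comm, smul_mul_assoc, mul_one, hU1]
    congr 1
    calc U * Matrix.diagonal (fun i => s i j) * star U * A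
        = U * Matrix.diagonal (fun i => s i j) * star U * (U * D * star U) := by rw [← hA]
      _ = U * Matrix.diagonal (fun i => s i j) * (star U * U) * D * star U := by
          simp only [mul_assoc]
      _ = _ := by rw [hU2]; simp only [mul_assoc, mul_one, one_mul]

/-- Newton–Maclaurin-type matrix inequality
(inequality (20) in the proof of Lemma 4.3). -/
theorem newton_maclaurin_matrix_inequality
    {n : ℕ} (hn : 1 ≤ n) (k : ℕ) (hk1 : 1 ≤ k) (hkn : k ≤ n)
    (A : Matrix (Fin n) (Fin n) ℝ) (hA : A.IsSymm) (hGamma : GammaPlus k A) :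
    0 < A.trace ∧ 0 < esymmMat k A ∧
      (A.trace • newtonT (k - 1) A - esymmMat k A • (1 : Matrix (Fin n) (Fin n) ℝ)).PosSemidef := by
  have hH : A.IsHermitian := by
    rw [Matrix.IsHermitian, Matrix.conjTranspose_eq_transpose_of_trivial]; exact hA
  have hk := hGamma k hk1 le_rfl
  have htr : esymmMat 1 A = A.trace := by
    haveI : Nonempty (Fin n) := ⟨⟨0, hn⟩⟩
    rw [Matrix.trace_eq_neg_charpoly_coeff, esymmMat]
    simp
  have ht : 0 < A.trace := htr ▸ hGamma 1 le_rfl hk1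
  refine ⟨ht, hk, ?_⟩
  set d := hH.eigenvalues with hd
  let s : Fin n → ℕ → ℝ := fun i j => (((Finset.univ.erase i).val.map d).esymm j)
  have h0 : ∀ i, s i 0 = 1 := fun i => by simp [s, Multiset.esymm]
  have hes : ∀ i j, j + 1 ≤ n → esymmMat (j + 1) A = s i (j + 1) + d i * s i j := by
    intro i j hj
    rw [nm_esymmMat_eq A hH _ hj, ← nm_esymm_cons, ← Multiset.map_cons, Finset.erase_val,
      Multiset.cons_erase (Finset.mem_univ_val i)]
  have hN : ∀ i j, s i j * s i (j + 2) ≤ s i (j + 1) ^ 2 := fun i j => nm_newton_esymm _ j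
  have key : ∀ i, 0 ≤ A.trace * s i (k - 1) - esymmMat k A := by
    intro i
    obtain ⟨m, rfl⟩ : ∃ m, k = m + 1 := ⟨k - 1, by omega⟩
    have hpos : ∀ j, j ≤ m → 0 < s i j := by
      intro j hj
      refine nm_gamma_drop (fun j => s i j + if j = 0 then 0 else d i * s i (j - 1)) (s i) (d i)
        (m + 1) (h0 i) (by simp) (hN i) ?_ j (by omega)
      intro j h1 h2
      obtain ⟨l, rfl⟩ : ∃ l, j = l + 1 := ⟨j - 1, by omega⟩
      have := hGamma (l + 1) h1 h2
      rw [hes i l (by omega)] at this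
      simpa using this
    have := nm_main_ineq (s i) m (h0 i) (hN i) hpos
    have e1 := hes i 0 (by omega)
    rw [zero_add, htr, h0, mul_one] at e1
    rw [hes i m (by omega), e1]
    simp only [Nat.add_sub_cancel]
    nlinarith
  set U : Matrix (Fin n) (Fin n) ℝ := (hH.eigenvectorUnitary : Matrix (Fin n) (Fin n) ℝ) with hU
  have hU1 : U * star U = 1 := Unitary.coe_mul_star_self hH.eigenvectorUnitary
  have hU2 : star U * U = 1 := Unitary.coe_star_mul_self hH.eigenvectorUnitary
  have hspec : A = U * Matrix.diagonal d * star U := by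
    have := hH.spectral_theorem
    rw [Unitary.conjStarAlgAut_apply] at this
    exact this
  have hT := nm_newtonT_eq A U _ d s rfl hU1 hU2 hspec n h0 hes (k - 1) (by omega)
  have hfin : A.trace • newtonT (k - 1) A - esymmMat k A • (1 : Matrix (Fin n) (Fin n) ℝ) =
      U * Matrix.diagonal (fun i => A.trace * s i (k - 1) - esymmMat k A) * star U := by
    have : Matrix.diagonal (fun i => A.trace * s i (k - 1) - esymmMat k A) =
        A.trace • Matrix.diagonal (fun i => s i (k - 1)) -
          esymmMat k A • (1 : Matrix (Fin n) (Fin n) ℝ) := by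
      rw [← Matrix.diagonal_smul, Matrix.smul_one_eq_diagonal, Matrix.diagonal_sub]
      rfl
    rw [this, hT, mul_sub, sub_mul, mul_smul_comm, smul_mul_assoc, mul_smul_comm, smul_mul_assoc,
      mul_one, hU1]
  rw [hfin]
  exact (Matrix.PosSemidef.diagonal (fun i => key i)).mul_mul_conjTranspose_same U
end

section
/- Pointwise second difference quotient inequality from concavity (Lemma 4.1 for classical solutions). Let Ω ⊆ ℝⁿ be a domain with n ≥ 3, let 2 ≤ k ≤ n, let f : Ω×ℝ×ℝⁿ → ℝ be continuous and positive, let H : Ω×ℝ×ℝⁿ → Sym_n(ℝ) be continuous, and let u ∈ C²(Ω) satisfy σ_k(A_H[u](x)) = f(x,u(x),∇u(x))^k and λ(A_H[u](x)) ∈ Γ_k^+ for every x ∈ Ω. Write f[u](x) := f(x,u(x),∇u(x)). Then for every h ≠ 0 and every x ∈ Ω such that x + h e_l ∈ Ω and x − h e_l ∈ Ω for all l ∈ {1,…,n}, one has Σ_{l=1}^n k·f[u](x)^{k−1}·Δ_{ll}^h(f[u])(x) ≤ Σ_{i,j} F[u]^{ij}(x)·(Σ_{l=1}^n Δ_{ll}^h(∂_i∂_j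 u)(x)) − Σ_{l=1}^n Σ_{i,j} F[u]^{ij}(x)·Δ_{ll}^h((H[u])_{ij})(x). -/
open MeasureTheory Metric Set Matrix

open Polynomial in
/-- elementary symmetric function of the variables `x i`, `i ∈ s`. -/
noncomputable def esy {ι : Type*} (s : Finset ι) (k : ℕ) (x : ι → ℝ) : ℝ :=
  (∏ i ∈ s, ((1 : ℝ[X]) + C (x i) * X)).coeff k

section esyLemmas
set_option linter.unusedSectionVars false
open Polynomial

variable {ι : Type*} [DecidableEq ι]

theorem esy_zero (s : Finset ι) (x : ι → ℝ) : esy s 0 x = 1 := by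
  simp [esy, Polynomial.coeff_zero_prod]

theorem esy_insert {s : Finset ι} {a : ι} (ha : a ∉ s) (k : ℕ) (x : ι → ℝ) :
    esy (insert a s) (k + 1) x = esy s (k + 1) x + x a * esy s k x := by
  unfold esy
  rw [Finset.prod_insert ha, add_mul, one_mul, coeff_add, mul_assoc, coeff_C_mul, coeff_X_mul]

theorem esy_erase {s : Finset ι} {a : ι} (ha : a ∈ s) (k : ℕ) (x : ι → ℝ) :
    esy s (k + 1) x = esy (s.erase a) (k + 1) x + x a * esy (s.erase a) k x := by
  conv_lhs => rw [← Finset.insert_erase ha]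
  exact esy_insert (Finset.notMem_erase a s) k x

theorem esy_empty (k : ℕ) (x : ι → ℝ) : esy (∅ : Finset ι) (k + 1) x = 0 := by
  simp [esy, coeff_one]

theorem esy_euler (s : Finset ι) (k : ℕ) (x : ι → ℝ) :
    ∑ i ∈ s, x i * esy (s.erase i) k x = (k + 1) * esy s (k + 1) x := by
  induction s using Finset.induction_on generalizing k with
  | empty => simp [esy_empty]
  | insert a s ha ih =>
    rw [Finset.sum_insert ha, Finset.erase_insert ha, esy_insert ha]
    have h1 : ∀ i ∈ s, (insert a s).erase i = insert a (s.erase i) := by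
      intro i hi
      rw [Finset.erase_insert_of_ne]
      rintro rfl; exact ha hi
    have h2 : ∀ i ∈ s, a ∉ s.erase i := fun i _ h => ha (Finset.mem_of_mem_erase h)
    cases k with
    | zero =>
      have := ih 0
      simp only [esy_zero] at this ⊢
      push_cast at this ⊢
      linarith
    | succ k =>
      have e : ∑ i ∈ s, x i * esy ((insert a s).erase i) (k + 1) x
          = ∑ i ∈ s, x i * esy (s.erase i) (k + 1) x
            + x a * ∑ i ∈ s, x i * esy (s.erase i) k x := by
        rw [Finset.mul_sum, ← Finset.sum_add_distrib]
        refine Finset.sum_congr rfl fun i hi => ?_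
        rw [h1 i hi, esy_insert (h2 i hi)]; ring
      rw [e, ih (k + 1), ih k]; push_cast; ring

theorem esy_hasDerivAt (s : Finset ι) (k : ℕ) (x y : ι → ℝ) (t : ℝ) :
    HasDerivAt (fun t : ℝ => esy s (k + 1) (x + t • y))
      (∑ i ∈ s, y i * esy (s.erase i) k (x + t • y)) t := by
  induction s using Finset.induction_on generalizing k with
  | empty => simpa [esy_empty] using hasDerivAt_const t (0 : ℝ)
  | insert a s ha ih =>
    rw [Finset.sum_insert ha, Finset.erase_insert ha]
    simp only [esy_insert ha]
    have h1 : ∀ i ∈ s, (insert a s).erase i = insert a (s.erase i) := by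
      intro i hi
      rw [Finset.erase_insert_of_ne]
      rintro rfl; exact ha hi
    have h2 : ∀ i ∈ s, a ∉ s.erase i := fun i _ h => ha (Finset.mem_of_mem_erase h)
    have hl : HasDerivAt (fun t : ℝ => (x + t • y) a) (y a) t := by
      simpa using ((hasDerivAt_id t).mul_const (y a)).const_add (x a)
    cases k with
    | zero =>
      have := (ih 0).add hl
      simp only [esy_zero] at this ⊢
      simp only [mul_one]
      rw [add_comm (y a)]
      refine (this.congr_deriv (by simp)).congr_of_eventuallyEq (Filter.Eventually.of_forall fun t => ?_)
      simp
    | succ k =>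
      have := (ih (k + 1)).add (hl.mul (ih k))
      refine this.congr_deriv ?_
      have e : ∑ i ∈ s, y i * esy ((insert a s).erase i) (k + 1) (x + t • y)
          = ∑ i ∈ s, y i * esy (s.erase i) (k + 1) (x + t • y)
            + (x + t • y) a * ∑ i ∈ s, y i * esy (s.erase i) k (x + t • y) := by
        rw [Finset.mul_sum, ← Finset.sum_add_distrib]
        refine Finset.sum_congr rfl fun i hi => ?_
        rw [h1 i hi, esy_insert (h2 i hi)]; ring
      rw [e]; ring

theorem splits_derivative_real {p : ℝ[X]} (hp : p.Splits) : (derivative p).Splits := by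
  rw [splits_iff_card_roots] at hp ⊢
  have h1 := card_roots_le_derivative p
  have h2 := card_roots' (derivative p)
  have h3 := natDegree_derivative_le p
  omega

theorem laguerre_real {p : ℝ[X]} (hp : p.Splits) (t : ℝ) :
    p.eval t * (derivative (derivative p)).eval t ≤ (derivative p).eval t ^ 2 := by
  unfold Splits at hp
  induction hp using Submonoid.closure_induction with
  | mem q hq =>
    rcases hq with ⟨a, rfl⟩ | ⟨a, rfl⟩ <;> simp
  | one => simp
  | mul p q _ _ h1 h2 =>
    simp only [derivative_mul, derivative_add, eval_mul, eval_add]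
    nlinarith [mul_le_mul_of_nonneg_left h1 (sq_nonneg (q.eval t)),
      mul_le_mul_of_nonneg_left h2 (sq_nonneg (p.eval t))]

theorem splits_esy_poly (s : Finset ι) (x : ι → ℝ) :
    (∏ i ∈ s, ((1 : ℝ[X]) + C (x i) * X)).Splits := by
  apply Splits.prod
  intro i _
  apply Splits.of_natDegree_le_one
  compute_degree

theorem esy_newton (s : Finset ι) (k : ℕ) (x : ι → ℝ) :
    esy s k x * esy s (k + 2) x ≤ esy s (k + 1) x ^ 2 := by
  have hs : ∀ k, (derivative^[k] (∏ i ∈ s, ((1 : ℝ[X]) + C (x i) * X))).Splits := by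
    intro k
    induction k with
    | zero => exact splits_esy_poly s x
    | succ k ih => rw [Function.iterate_succ_apply']; exact splits_derivative_real ih
  have h := laguerre_real (hs k) 0
  rw [← Function.iterate_succ_apply' (fun p : ℝ[X] => derivative p),
    ← Function.iterate_succ_apply' (fun p : ℝ[X] => derivative p), ← coeff_zero_eq_eval_zero,
    ← coeff_zero_eq_eval_zero, ← coeff_zero_eq_eval_zero, coeff_iterate_derivative,
    coeff_iterate_derivative, coeff_iterate_derivative] at h
  simp only [zero_add, Nat.descFactorial_self, nsmul_eq_mul, Nat.succ_eq_add_one] at h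
  change (k.factorial : ℝ) * esy s k x * (((k + 1 + 1).factorial : ℝ) * esy s (k + 2) x) ≤
    (((k + 1).factorial : ℝ) * esy s (k + 1) x) ^ 2 at h
  rw [Nat.factorial_succ (k + 1), Nat.factorial_succ k] at h
  push_cast at h
  have hf : (0 : ℝ) < (k.factorial : ℝ) ^ 2 * (k + 1) := by positivity
  set a := esy s k x * esy s (k + 2) x
  set b := esy s (k + 1) x
  have h' : ((k.factorial : ℝ) ^ 2 * (k + 1)) * ((k + 2) * a) ≤
      ((k.factorial : ℝ) ^ 2 * (k + 1)) * ((k + 1) * b ^ 2) := by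
    calc _ = (k.factorial : ℝ) * esy s k x *
          (((k : ℝ) + 1 + 1) * (((k : ℝ) + 1) * k.factorial) * esy s (k + 2) x) := by
            simp only [a]; ring
      _ ≤ _ := h
      _ = _ := by ring
  have h'' := le_of_mul_le_mul_left h' hf
  have hk : (0 : ℝ) ≤ k := by positivity
  by_contra hc
  push Not at hc
  nlinarith [sq_nonneg b]

/-- cone `Γ_k` for the variables indexed by `s`. -/
def Gam (s : Finset ι) (k : ℕ) (x : ι → ℝ) : Prop := ∀ j ≤ k, 0 < esy s j x

theorem Gam.mono {s : Finset ι} {k l : ℕ} {x : ι → ℝ} (h : Gam s k x) (hl : l ≤ k) :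
    Gam s l x := fun j hj => h j (hj.trans hl)

theorem Gam.erase {s : Finset ι} {k : ℕ} {x : ι → ℝ} (h : Gam s (k + 1) x) {a : ι} (ha : a ∈ s) :
    Gam (s.erase a) k x := by
  induction k with
  | zero => intro j hj; obtain rfl : j = 0 := by omega
            rw [esy_zero]; norm_num
  | succ k ih =>
    have ih := ih (h.mono (by omega))
    intro j hj
    rcases Nat.lt_or_ge j (k + 1) with h' | h'
    · exact ih j (by omega)
    obtain rfl : j = k + 1 := by omega
    by_contra hc
    push Not at hc
    have h0 := ih k le_rfl
    have h1 := h (k + 1) (by omega)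
    have h2 := h (k + 2) (by omega)
    rw [esy_erase ha] at h1 h2
    have hN := esy_newton (s.erase a) k x
    set p := esy (s.erase a) k x
    set q := esy (s.erase a) (k + 1) x
    set r := esy (s.erase a) (k + 1 + 1) x
    change p * r ≤ q ^ 2 at hN
    have h3 : 0 ≤ (q + x a * p) * (-q) := mul_nonneg h1.le (by linarith)
    have h4 : 0 < p * (r + x a * q) := mul_pos h0 h2
    nlinarith

theorem quot_aux {x y s t q : ℝ} (hs : 0 < s) (ht : 0 < t) (hq : s + t ≤ q) :
    (x + y) ^ 2 / q ≤ x ^ 2 / s + y ^ 2 / t := by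
  calc (x + y) ^ 2 / q ≤ (x + y) ^ 2 / (s + t) := by gcongr
    _ ≤ _ := by
      rw [div_add_div _ _ hs.ne' ht.ne', div_le_div_iff₀ (by positivity) (by positivity)]
      nlinarith [sq_nonneg (x * t - y * s), mul_pos hs ht]

theorem quot_formula {s : Finset ι} {k : ℕ} {x : ι → ℝ} (h0 : 0 < esy s (k + 1) x)
    (h : ∀ i ∈ s, 0 < esy (s.erase i) k x) :
    ((k : ℝ) + 2) * (esy s (k + 2) x / esy s (k + 1) x) =
      ∑ i ∈ s, (x i - x i ^ 2 / (x i + esy (s.erase i) (k + 1) x / esy (s.erase i) k x)) := by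
  have e := esy_euler s (k + 1) x
  push_cast at e
  rw [mul_div_assoc', show ((k : ℝ) + 2) = k + 1 + 1 by ring, ← e, Finset.sum_div]
  refine Finset.sum_congr rfl fun i hi => ?_
  have hi0 := h i hi
  have : x i + esy (s.erase i) (k + 1) x / esy (s.erase i) k x =
      esy s (k + 1) x / esy (s.erase i) k x := by
    rw [esy_erase hi]; field_simp; ring
  rw [this]
  have e2 := esy_erase hi k x
  field_simp
  rw [e2]; ring

theorem quot_superadd (k : ℕ) : ∀ (s : Finset ι) (x y : ι → ℝ), Gam s (k + 1) x → Gam s (k + 1) y →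
    Gam s (k + 1) (x + y) ∧ esy s (k + 1) x / esy s k x + esy s (k + 1) y / esy s k y ≤
      esy s (k + 1) (x + y) / esy s k (x + y) := by
  induction k with
  | zero =>
    intro s x y hx hy
    have e : esy s 1 (x + y) = esy s 1 x + esy s 1 y := by
      have e1 := esy_euler s 0 x
      have e2 := esy_euler s 0 y
      have e3 := esy_euler s 0 (x + y)
      simp only [esy_zero, mul_one, Pi.add_apply, Finset.sum_add_distrib] at e1 e2 e3
      norm_num at e1 e2 e3
      linarith
    refine ⟨?_, ?_⟩
    · intro j hj
      have h1 := hx 1 le_rfl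
      have h2 := hy 1 le_rfl
      obtain rfl | rfl : j = 0 ∨ j = 1 := by omega
      · rw [esy_zero]; norm_num
      · rw [e]; linarith
    · simp [esy_zero, e]
  | succ k ih =>
    intro s x y hx hy
    obtain ⟨hG, hQ⟩ := ih s x y (hx.mono (by omega)) (hy.mono (by omega))
    have hi := fun i (hi : i ∈ s) => ih (s.erase i) x y (hx.erase hi) (hy.erase hi)
    have fx := quot_formula (hx (k + 1) (by omega)) (fun i h => hx.erase h k (by omega))
    have fy := quot_formula (hy (k + 1) (by omega)) (fun i h => hy.erase h k (by omega))
    have fxy := quot_formula (hG (k + 1) (by omega)) (fun i h => (hi i h).1 k (by omega))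
    have key : esy s (k + 1 + 1) x / esy s (k + 1) x + esy s (k + 1 + 1) y / esy s (k + 1) y ≤
      esy s (k + 1 + 1) (x + y) / esy s (k + 1) (x + y) := by
      have hk : (0 : ℝ) < (k : ℝ) + 2 := by positivity
      refine le_of_mul_le_mul_left ?_ hk
      rw [mul_add]
      change (k + 2 : ℝ) * (esy s (k + 2) x / _) + (k + 2 : ℝ) * (esy s (k + 2) y / _) ≤
        (k + 2 : ℝ) * (esy s (k + 2) (x + y) / _)
      rw [fx, fy, fxy, ← Finset.sum_add_distrib]
      refine Finset.sum_le_sum fun i his => ?_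
      have pos : ∀ z : ι → ℝ, Gam s (k + 2) z →
          0 < z i + esy (s.erase i) (k + 1) z / esy (s.erase i) k z := by
        intro z hz
        have h1 := hz (k + 1) (by omega)
        have h2 := hz.erase his k (by omega)
        rw [esy_erase his] at h1
        have : z i + esy (s.erase i) (k + 1) z / esy (s.erase i) k z =
          (esy (s.erase i) (k + 1) z + z i * esy (s.erase i) k z) / esy (s.erase i) k z := by
            field_simp; ring
        rw [this]; positivity
      have := quot_aux (x := x i) (y := y i) (pos x hx) (pos y hy)
        (q := (x + y) i + esy (s.erase i) (k + 1) (x + y) / esy (s.erase i) k (x + y)) (by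
          have := (hi i his).2
          simp only [Pi.add_apply]
          linarith)
      simp only [Pi.add_apply] at this ⊢
      linarith
    refine ⟨?_, key⟩
    intro j hj
    rcases Nat.lt_or_ge j (k + 2) with h' | h'
    · exact hG j (by omega)
    obtain rfl : j = k + 2 := by omega
    have a1 := hx (k + 2) le_rfl
    have a2 := hx (k + 1) (by omega)
    have a3 := hy (k + 2) le_rfl
    have a4 := hy (k + 1) (by omega)
    have a5 := hG (k + 1) (by omega)
    have : 0 < esy s (k + 2) (x + y) / esy s (k + 1) (x + y) :=
      lt_of_lt_of_le (by positivity) key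
    exact (div_pos_iff_of_pos_right a5).1 this

theorem esy_smul (s : Finset ι) (k : ℕ) (t : ℝ) (x : ι → ℝ) :
    esy s k (t • x) = t ^ k * esy s k x := by
  induction s using Finset.induction_on generalizing k with
  | empty => cases k <;> simp [esy_zero, esy_empty]
  | insert a s ha ih =>
    cases k with
    | zero => simp [esy_zero]
    | succ k => rw [esy_insert ha, esy_insert ha, ih, ih]; simp; ring

theorem esy_eq_prod {s : Finset ι} (k : ℕ) {x : ι → ℝ} (h : Gam s k x) :
    esy s k x = ∏ j ∈ Finset.range k, esy s (j + 1) x / esy s j x := by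
  induction k with
  | zero => simp [esy_zero]
  | succ k ih =>
    have := h k (by omega)
    rw [Finset.prod_range_succ, ← ih (h.mono (by omega))]
    field_simp

theorem amgm_aux {k : ℕ} (hk : 0 < k) (p q : ℕ → ℝ) (hp : ∀ j ∈ Finset.range k, 0 < p j)
    (hq : ∀ j ∈ Finset.range k, 0 < q j) {a b : ℝ} (ha : 0 < a) (hb : 0 < b)
    (hpa : ∏ j ∈ Finset.range k, p j = a ^ k) (hqb : ∏ j ∈ Finset.range k, q j = b ^ k) :
    (k : ℝ) * (b / a) ≤ ∑ j ∈ Finset.range k, q j / p j := by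
  have hk' : (0 : ℝ) < k := by exact_mod_cast hk
  have h := Real.geom_mean_le_arith_mean (Finset.range k) (fun _ => 1) (fun j => q j / p j)
    (fun _ _ => zero_le_one) (by simpa using hk)
    (fun j hj => (div_pos (hq j hj) (hp j hj)).le)
  simp only [Real.rpow_one, Finset.prod_div_distrib, hpa, hqb, Finset.sum_const, Finset.card_range,
    nsmul_eq_mul, mul_one, one_mul] at h
  rw [← div_pow, Real.pow_rpow_inv_natCast (by positivity) hk.ne', le_div_iff₀ hk'] at h
  linarith

theorem garding_vec {s : Finset ι} {k : ℕ} {x y : ι → ℝ} (hx : Gam s (k + 1) x)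
    (hy : Gam s (k + 1) y) {a b : ℝ} (ha : 0 < a) (hb : 0 < b)
    (hxa : esy s (k + 1) x = a ^ (k + 1)) (hyb : esy s (k + 1) y = b ^ (k + 1)) :
    ((k : ℝ) + 1) * a ^ k * b ≤ ∑ i ∈ s, y i * esy (s.erase i) k x := by
  set p : ℕ → ℝ := fun j => esy s (j + 1) x / esy s j x with hp
  set q : ℕ → ℝ := fun j => esy s (j + 1) y / esy s j y with hq
  have hp0 : ∀ j ∈ Finset.range (k + 1), 0 < p j := fun j hj => by
    have hj := Finset.mem_range.1 hj
    exact div_pos (hx _ (by omega)) (hx _ (by omega))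
  have hq0 : ∀ j ∈ Finset.range (k + 1), 0 < q j := fun j hj => by
    have hj := Finset.mem_range.1 hj
    exact div_pos (hy _ (by omega)) (hy _ (by omega))
  have hpa : ∏ j ∈ Finset.range (k + 1), p j = a ^ (k + 1) := by rw [← hxa, esy_eq_prod _ hx]
  have hqb : ∏ j ∈ Finset.range (k + 1), q j = b ^ (k + 1) := by rw [← hyb, esy_eq_prod _ hy]
  have ham := amgm_aux (Nat.succ_pos k) p q hp0 hq0 ha hb hpa hqb
  -- lower bound for positive parameters
  have hlow : ∀ t : ℝ, 0 < t → ∏ j ∈ Finset.range (k + 1), (p j + t * q j) ≤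
      esy s (k + 1) (x + t • y) := by
    intro t ht
    have hty : Gam s (k + 1) (t • y) := by
      intro j hj; rw [esy_smul]; have := hy j hj; positivity
    have hG := (quot_superadd k s x (t • y) hx hty).1
    rw [esy_eq_prod _ hG]
    refine Finset.prod_le_prod (fun j hj => ?_) (fun j hj => ?_)
    · have := hp0 j hj; have := hq0 j hj; positivity
    · have hj := Finset.mem_range.1 hj
      have := (quot_superadd j s x (t • y) (hx.mono (by omega)) (hty.mono (by omega))).2
      refine le_trans (le_of_eq ?_) this
      rw [esy_smul, esy_smul]
      have := hy j (by omega)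
      simp only [hp, hq]
      field_simp
      ring
  have hd := esy_hasDerivAt s k x y 0
  simp only [zero_smul, add_zero] at hd
  have hd2 : HasDerivAt (fun t : ℝ => ∏ j ∈ Finset.range (k + 1), (p j + t * q j))
      (∑ j ∈ Finset.range (k + 1), (∏ i ∈ (Finset.range (k + 1)).erase j, p i) * q j) 0 := by
    have := HasDerivAt.fun_finsetProd (u := Finset.range (k + 1)) (x := (0 : ℝ))
      (f := fun j (t : ℝ) => p j + t * q j) (f' := fun j => q j)
      (fun j _ => by simpa using ((hasDerivAt_id (0 : ℝ)).mul_const (q j)).const_add (p j))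
    simpa using this
  have hsum : ∑ j ∈ Finset.range (k + 1), (∏ i ∈ (Finset.range (k + 1)).erase j, p i) * q j =
      a ^ (k + 1) * ∑ j ∈ Finset.range (k + 1), q j / p j := by
    rw [Finset.mul_sum]
    refine Finset.sum_congr rfl fun j hj => ?_
    rw [← hpa, ← Finset.mul_prod_erase _ _ hj]
    have := hp0 j hj
    field_simp
  have hge : ∑ j ∈ Finset.range (k + 1), (∏ i ∈ (Finset.range (k + 1)).erase j, p i) * q j ≤
      ∑ i ∈ s, y i * esy (s.erase i) k x := by
    have t1 := (hasDerivAt_iff_tendsto_slope_zero.1 hd).mono_left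
      (nhdsGT_le_nhdsNE (0 : ℝ))
    have t2 := (hasDerivAt_iff_tendsto_slope_zero.1 hd2).mono_left
      (nhdsGT_le_nhdsNE (0 : ℝ))
    refine le_of_tendsto_of_tendsto t2 t1 ?_
    filter_upwards [self_mem_nhdsWithin] with t ht
    have ht : 0 < t := ht
    have := hlow t ht
    simp only [zero_add, zero_mul, add_zero, zero_smul, smul_eq_mul, hpa, hxa]
    have : 0 ≤ t⁻¹ := by positivity
    gcongr
  rw [hsum] at hge
  refine le_trans ?_ hge
  calc ((k : ℝ) + 1) * a ^ k * b = a ^ (k + 1) * (((k + 1 : ℕ) : ℝ) * (b / a)) := by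
        push_cast; field_simp; ring
    _ ≤ _ := by gcongr

end esyLemmas

section matrixPart
open Polynomial

theorem esy_eq_zero {ι : Type*} [DecidableEq ι] (s : Finset ι) (k : ℕ) (hk : s.card < k)
    (x : ι → ℝ) : esy s k x = 0 := by
  induction s using Finset.induction_on generalizing k with
  | empty => cases k with
    | zero => simp at hk
    | succ k => exact esy_empty k x
  | insert a s ha ih =>
    rw [Finset.card_insert_of_notMem ha] at hk
    cases k with
    | zero => omega
    | succ k => rw [esy_insert ha, ih _ (by omega), ih _ (by omega)]; ring

theorem coeff_prod_esy {ι : Type*} [DecidableEq ι] (s : Finset ι) (k : ℕ) (hk : k ≤ s.card)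
    (x : ι → ℝ) :
    (-1 : ℝ) ^ k * (∏ i ∈ s, (X - C (x i))).coeff (s.card - k) = esy s k x := by
  induction s using Finset.induction_on generalizing k with
  | empty => simp only [Finset.card_empty, Nat.le_zero] at hk; subst hk; simp [esy_zero]
  | insert a s ha ih =>
    have hdeg : (∏ i ∈ s, (X - C (x i))).natDegree = s.card := by simp
    rw [Finset.card_insert_of_notMem ha] at hk ⊢
    rw [Finset.prod_insert ha]
    cases k with
    | zero =>
      have h0 := ih 0 (by omega)
      have h1 : (∏ i ∈ s, (X - C (x i))).coeff (s.card + 1) = 0 :=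
        coeff_eq_zero_of_natDegree_lt (by omega)
      simp only [esy_zero, pow_zero, one_mul, Nat.sub_zero] at h0 ⊢
      rw [sub_mul, coeff_sub, coeff_X_mul, coeff_C_mul, h1, h0]; ring
    | succ k =>
      rw [esy_insert ha, Nat.add_sub_add_right, sub_mul, coeff_sub, coeff_C_mul]
      have hk0 := ih k (by omega)
      rcases Nat.lt_or_ge k s.card with h | h
      · have hk1 := ih (k + 1) (by omega)
        obtain ⟨j, hj⟩ : ∃ j, s.card - k = j + 1 := ⟨s.card - k - 1, by omega⟩
        have hj' : s.card - (k + 1) = j := by omega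
        rw [hj'] at hk1
        rw [hj] at hk0 ⊢
        rw [coeff_X_mul, ← hk0, ← hk1, pow_succ]; ring
      · have : s.card - k = 0 := by omega
        rw [esy_eq_zero s (k + 1) (by omega), ← hk0, this, coeff_X_mul_zero, pow_succ]; ring

theorem exists_spectral {n : ℕ} {A : Matrix (Fin n) (Fin n) ℝ} (hA : A.IsSymm) :
    ∃ (U : Matrix (Fin n) (Fin n) ℝ) (lam : Fin n → ℝ), Uᵀ * U = 1 ∧ U * Uᵀ = 1 ∧
      A = U * Matrix.diagonal lam * Uᵀ := by
  have hH : A.IsHermitian := by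
    rw [Matrix.IsHermitian, Matrix.conjTranspose_eq_transpose_of_trivial]; exact hA
  refine ⟨hH.eigenvectorUnitary, hH.eigenvalues, ?_, ?_, ?_⟩
  · rw [← Matrix.conjTranspose_eq_transpose_of_trivial]
    exact Unitary.coe_star_mul_self hH.eigenvectorUnitary
  · rw [← Matrix.conjTranspose_eq_transpose_of_trivial]
    exact Unitary.coe_mul_star_self hH.eigenvectorUnitary
  · rw [← Matrix.conjTranspose_eq_transpose_of_trivial]
    have := hH.spectral_theorem
    rw [Unitary.conjStarAlgAut_apply] at this
    exact this

variable {n : ℕ} {A U : Matrix (Fin n) (Fin n) ℝ} {lam : Fin n → ℝ}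

theorem esymmMat_eq (hU : Uᵀ * U = 1) (hA : A = U * Matrix.diagonal lam * Uᵀ) {k : ℕ}
    (hk : k ≤ n) : esymmMat k A = esy Finset.univ k lam := by
  have hc : A.charpoly = ∏ i, (X - C (lam i)) := by
    rw [hA, Matrix.charpoly_mul_comm, ← mul_assoc, hU, one_mul, Matrix.charpoly_diagonal]
  have := coeff_prod_esy (Finset.univ : Finset (Fin n)) k (by simpa using hk) lam
  rw [Finset.card_univ, Fintype.card_fin] at this
  rw [esymmMat, hc, this]

theorem newtonT_eq (hU : Uᵀ * U = 1) (hU' : U * Uᵀ = 1) (hA : A = U * Matrix.diagonal lam * Uᵀ)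
    {k : ℕ} (hk : k ≤ n) :
    newtonT k A = U * Matrix.diagonal (fun i => esy (Finset.univ.erase i) k lam) * Uᵀ := by
  induction k with
  | zero => simp [newtonT, esy_zero, hU']
  | succ k ih =>
    rw [newtonT, ih (by omega), esymmMat_eq hU hA hk]
    have h1 : U * Matrix.diagonal (fun i => esy (Finset.univ.erase i) k lam) * Uᵀ * A =
        U * Matrix.diagonal (fun i => esy (Finset.univ.erase i) k lam * lam i) * Uᵀ := by
      conv_lhs => rw [hA]
      rw [← Matrix.diagonal_mul_diagonal]
      calc _ = U * Matrix.diagonal (fun i => esy (Finset.univ.erase i) k lam) * (Uᵀ * U) *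
              Matrix.diagonal lam * Uᵀ := by simp only [mul_assoc]
        _ = _ := by rw [hU]; simp only [mul_assoc, one_mul]
    have h2 : (esy Finset.univ (k + 1) lam) • (1 : Matrix (Fin n) (Fin n) ℝ) =
        U * Matrix.diagonal (fun _ => esy Finset.univ (k + 1) lam) * Uᵀ := by
      rw [← Matrix.smul_one_eq_diagonal]; simp [hU']
    rw [h1, h2, ← sub_mul, ← mul_sub, Matrix.diagonal_sub]
    congr 3
    ext i
    rw [esy_erase (Finset.mem_univ i)]; ring

/-- contraction of the diagonalised tensor with another diagonalised matrix -/
theorem contraction_eq {T B V : Matrix (Fin n) (Fin n) ℝ} {tau mu : Fin n → ℝ}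
    (hT : T = U * Matrix.diagonal tau * Uᵀ) (hB : B = V * Matrix.diagonal mu * Vᵀ) :
    ∑ i, ∑ j, T i j * B i j = ∑ p, ∑ q, tau p * ((Uᵀ * V) p q) ^ 2 * mu q := by
  have hBs : B = Bᵀ := by rw [hB]; simp [Matrix.transpose_mul, mul_assoc]
  have h1 : ∑ i, ∑ j, T i j * B i j = Matrix.trace (T * B) := by
    simp only [Matrix.trace, Matrix.diag, Matrix.mul_apply]
    refine Finset.sum_congr rfl fun i _ => Finset.sum_congr rfl fun j _ => ?_
    conv_lhs => rw [hBs]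
    rfl
  have h2 : Matrix.trace (T * B) = Matrix.trace (Matrix.diagonal tau *
      ((Uᵀ * V) * Matrix.diagonal mu * (Uᵀ * V)ᵀ)) := by
    rw [hT, hB, mul_assoc, mul_assoc, Matrix.trace_mul_comm]
    simp only [Matrix.transpose_mul, Matrix.transpose_transpose, mul_assoc]
  rw [h1, h2]
  simp only [Matrix.trace, Matrix.diag, Matrix.diagonal_mul]
  refine Finset.sum_congr rfl fun p _ => ?_
  rw [Matrix.mul_apply, Finset.mul_sum]
  refine Finset.sum_congr rfl fun q _ => ?_
  rw [Matrix.mul_diagonal, Matrix.transpose_apply]; ring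

theorem esy_perm (e : Equiv.Perm (Fin n)) (k : ℕ) (x : Fin n → ℝ) :
    esy Finset.univ k (x ∘ e) = esy Finset.univ k x := by
  unfold esy
  congr 1
  exact Equiv.prod_comp e (fun i => (1 : ℝ[X]) + C (x i) * X)

theorem sq_doublyStochastic {W : Matrix (Fin n) (Fin n) ℝ} (h1 : W * Wᵀ = 1) (h2 : Wᵀ * W = 1) :
    (Matrix.of fun p q => (W p q) ^ 2) ∈ doublyStochastic ℝ (Fin n) := by
  rw [mem_doublyStochastic_iff_sum]
  refine ⟨fun i j => by simp only [Matrix.of_apply]; positivity, fun i => ?_, fun j => ?_⟩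
  · have := congrFun (congrFun h1 i) i
    simp only [Matrix.mul_apply, Matrix.transpose_apply, Matrix.one_apply_eq] at this
    rw [← this]
    exact Finset.sum_congr rfl fun q _ => by simp only [Matrix.of_apply]; ring
  · have := congrFun (congrFun h2 j) j
    simp only [Matrix.mul_apply, Matrix.transpose_apply, Matrix.one_apply_eq] at this
    rw [← this]
    exact Finset.sum_congr rfl fun q _ => by simp only [Matrix.of_apply]; ring

theorem gam_of_gammaPlus (hU : Uᵀ * U = 1) (hA : A = U * Matrix.diagonal lam * Uᵀ) {k : ℕ}
    (hk : k ≤ n) (h : GammaPlus k A) : Gam Finset.univ k lam := by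
  intro j hj
  cases j with
  | zero => rw [esy_zero]; norm_num
  | succ j => rw [← esymmMat_eq hU hA (hj.trans hk)]; exact h _ (by omega) hj

theorem garding_mat {B : Matrix (Fin n) (Fin n) ℝ} (hA : A.IsSymm) (hB : B.IsSymm) {k : ℕ}
    (hk : k + 1 ≤ n) (hAG : GammaPlus (k + 1) A) (hBG : GammaPlus (k + 1) B) {a b : ℝ}
    (ha : 0 < a) (hb : 0 < b) (hAa : esymmMat (k + 1) A = a ^ (k + 1))
    (hBb : esymmMat (k + 1) B = b ^ (k + 1)) :
    ((k : ℝ) + 1) * a ^ k * b ≤ ∑ i, ∑ j, newtonT k A i j * B i j := by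
  obtain ⟨U, lam, hU, hU', hAd⟩ := exists_spectral hA
  obtain ⟨V, mu, hV, hV', hBd⟩ := exists_spectral hB
  have hlam := gam_of_gammaPlus hU hAd hk hAG
  have hmu := gam_of_gammaPlus hV hBd hk hBG
  rw [esymmMat_eq hU hAd hk] at hAa
  rw [esymmMat_eq hV hBd hk] at hBb
  rw [contraction_eq (newtonT_eq hU hU' hAd (by omega)) hBd]
  set W := Uᵀ * V with hW
  have hW1 : W * Wᵀ = 1 := by
    rw [hW, Matrix.transpose_mul, Matrix.transpose_transpose, mul_assoc, ← mul_assoc V, hV',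
      one_mul, hU]
  have hW2 : Wᵀ * W = 1 := by
    rw [hW, Matrix.transpose_mul, Matrix.transpose_transpose, mul_assoc, ← mul_assoc U, hU',
      one_mul, hV]
  obtain ⟨w, hw0, hw1, hw2⟩ := exists_eq_sum_perm_of_mem_doublyStochastic
    (sq_doublyStochastic hW1 hW2)
  have hent : ∀ p q, (W p q) ^ 2 = ∑ e, w e * (if e p = q then 1 else 0) := by
    intro p q
    have := congrFun (congrFun hw2 p) q
    simp only [Matrix.sum_apply, Matrix.smul_apply, Matrix.of_apply, smul_eq_mul] at this
    rw [← this]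
    refine Finset.sum_congr rfl fun e _ => ?_
    simp [Equiv.Perm.permMatrix, PEquiv.toMatrix_apply, eq_comm]
  have hper : ∀ e : Equiv.Perm (Fin n), ((k : ℝ) + 1) * a ^ k * b ≤
      ∑ p, mu (e p) * esy (Finset.univ.erase p) k lam := by
    intro e
    exact garding_vec (y := mu ∘ e) hlam (fun j hj => by rw [esy_perm]; exact hmu j hj) ha hb hAa
      (by rw [esy_perm]; exact hBb)
  calc ((k : ℝ) + 1) * a ^ k * b = ∑ e, w e * (((k : ℝ) + 1) * a ^ k * b) := by
        rw [← Finset.sum_mul, hw1, one_mul]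
    _ ≤ ∑ e, w e * ∑ p, mu (e p) * esy (Finset.univ.erase p) k lam :=
        Finset.sum_le_sum fun e _ => mul_le_mul_of_nonneg_left (hper e) (hw0 e)
    _ = ∑ p, ∑ q, esy (Finset.univ.erase p) k lam * (W p q) ^ 2 * mu q := by
        simp only [hent, Finset.mul_sum, Finset.sum_mul]
        rw [Finset.sum_comm]
        refine Finset.sum_congr rfl fun p _ => ?_
        rw [Finset.sum_comm]
        refine Finset.sum_congr rfl fun e _ => ?_
        rw [Finset.sum_eq_single (e p)]
        · simp; ring
        · intro q _ hq; simp [hq.symm]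
        · simp

theorem newton_self (hA : A.IsSymm) {k : ℕ} (hk : k + 1 ≤ n) :
    ∑ i, ∑ j, newtonT k A i j * A i j = ((k : ℝ) + 1) * esymmMat (k + 1) A := by
  obtain ⟨U, lam, hU, hU', hAd⟩ := exists_spectral hA
  rw [contraction_eq (newtonT_eq hU hU' hAd (by omega)) hAd, esymmMat_eq hU hAd hk, hU,
    ← esy_euler]
  refine Finset.sum_congr rfl fun p _ => ?_
  rw [Finset.sum_eq_single p]
  · simp; ring
  · intro q _ hq; simp [Matrix.one_apply_ne hq.symm]
  · simp

theorem hess_isSymm {Ω : Set (Fin n → ℝ)} (hΩ : IsOpen Ω) {u : (Fin n → ℝ) → ℝ}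
    (hu : ContDiffOn ℝ 2 u Ω) {x : Fin n → ℝ} (hx : x ∈ Ω) : (hess u x).IsSymm := by
  have hc : ContDiffAt ℝ 2 u x := hu.contDiffAt (hΩ.mem_nhds hx)
  have hs := hc.isSymmSndFDerivAt (by simp)
  have hd : DifferentiableAt ℝ (fderiv ℝ u) x :=
    (hc.fderiv_right (m := 1) (by norm_num)).differentiableAt (by norm_num)
  have key : ∀ i j, hess u x i j = fderiv ℝ (fderiv ℝ u) x (Pi.single i 1) (Pi.single j 1) := by
    intro i j
    simp only [hess, Matrix.of_apply]
    change fderiv ℝ (fun y => fderiv ℝ u y (Pi.single j 1)) x (Pi.single i 1) = _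
    rw [fderiv_clm_apply hd (differentiableAt_const _)]
    simp
  ext i j
  rw [Matrix.transpose_apply, key, key]
  exact hs.eq _ _

end matrixPart

/-- Pointwise second difference quotient inequality from concavity
(Lemma 4.1 for classical solutions). -/
theorem pointwise_second_difference_quotient_inequality
    {n : ℕ} (hn : 3 ≤ n) (k : ℕ) (hk2 : 2 ≤ k) (hkn : k ≤ n)
    (Ω : Set (Fin n → ℝ)) (hΩ : IsOpen Ω)
    (f : ((Fin n → ℝ) × ℝ × (Fin n → ℝ)) → ℝ)
    (hfc : ContinuousOn f (Ω ×ˢ ((univ : Set ℝ) ×ˢ (univ : Set (Fin n → ℝ)))))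
    (hfpos : ∀ y ∈ Ω ×ˢ ((univ : Set ℝ) ×ˢ (univ : Set (Fin n → ℝ))), 0 < f y)
    (H : ((Fin n → ℝ) × ℝ × (Fin n → ℝ)) → Matrix (Fin n) (Fin n) ℝ)
    (hHc : ∀ i j : Fin n,
      ContinuousOn (fun y => H y i j) (Ω ×ˢ ((univ : Set ℝ) ×ˢ (univ : Set (Fin n → ℝ)))))
    (hHsymm : ∀ y ∈ Ω ×ˢ ((univ : Set ℝ) ×ˢ (univ : Set (Fin n → ℝ))), (H y).IsSymm)
    (u : (Fin n → ℝ) → ℝ) (hu : ContDiffOn ℝ 2 u Ω)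
    (heq : ∀ x ∈ Ω,
      esymmMat k (hess u x - H (x, u x, grad u x)) = f (x, u x, grad u x) ^ k ∧
      GammaPlus k (hess u x - H (x, u x, grad u x)))
    (h : ℝ) (hh : h ≠ 0) (x : Fin n → ℝ) (hx : x ∈ Ω)
    (hxl : ∀ l : Fin n, x + h • (Pi.single l 1 : Fin n → ℝ) ∈ Ω ∧
      x - h • (Pi.single l 1 : Fin n → ℝ) ∈ Ω) :
    ∑ l : Fin n, (k : ℝ) * f (x, u x, grad u x) ^ (k - 1) *
        ddq l h (fun y => f (y, u y, grad u y)) x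
      ≤ (∑ i, ∑ j, newtonT (k - 1) (hess u x - H (x, u x, grad u x)) i j *
            (∑ l : Fin n, ddq l h (fun y => hess u y i j) x))
        - ∑ l : Fin n, ∑ i, ∑ j,
            newtonT (k - 1) (hess u x - H (x, u x, grad u x)) i j *
              ddq l h (fun y => H (y, u y, grad u y) i j) x := by
  obtain ⟨m, rfl⟩ : ∃ m, k = m + 1 := ⟨k - 1, by omega⟩
  simp only [Nat.add_sub_cancel]
  set A : (Fin n → ℝ) → Matrix (Fin n) (Fin n) ℝ :=
    fun y => hess u y - H (y, u y, grad u y) with hAdef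
  set g : (Fin n → ℝ) → ℝ := fun y => f (y, u y, grad u y) with hg
  have hmem : ∀ y ∈ Ω, (y, u y, grad u y) ∈
      Ω ×ˢ ((univ : Set ℝ) ×ˢ (univ : Set (Fin n → ℝ))) := fun y hy => ⟨hy, trivial, trivial⟩
  have hsym : ∀ y ∈ Ω, (A y).IsSymm := fun y hy =>
    (hess_isSymm hΩ hu hy).sub (hHsymm _ (hmem y hy))
  have hpos : ∀ y ∈ Ω, 0 < g y := fun y hy => hfpos _ (hmem y hy)
  have hG : ∀ y ∈ Ω, ((m : ℝ) + 1) * g x ^ m * g y ≤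
      ∑ i, ∑ j, newtonT m (A x) i j * A y i j := fun y hy =>
    garding_mat (hsym x hx) (hsym y hy) hkn (heq x hx).2 (heq y hy).2 (hpos x hx) (hpos y hy)
      (heq x hx).1 (heq y hy).1
  have hself : ∑ i, ∑ j, newtonT m (A x) i j * A x i j = ((m : ℝ) + 1) * g x ^ m * g x := by
    rw [newton_self (hsym x hx) hkn, (heq x hx).1, pow_succ]; ring
  have hR : (∑ i, ∑ j, newtonT m (A x) i j *
            (∑ l : Fin n, ddq l h (fun y => hess u y i j) x))
        - ∑ l : Fin n, ∑ i, ∑ j, newtonT m (A x) i j *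
              ddq l h (fun y => H (y, u y, grad u y) i j) x
      = ∑ l : Fin n, ∑ i, ∑ j, newtonT m (A x) i j * ddq l h (fun y => A y i j) x := by
    have e1 : ∑ i, ∑ j, newtonT m (A x) i j *
            (∑ l : Fin n, ddq l h (fun y => hess u y i j) x)
        = ∑ l : Fin n, ∑ i, ∑ j, newtonT m (A x) i j * ddq l h (fun y => hess u y i j) x := by
      rw [Finset.sum_comm]
      simp only [Finset.mul_sum]
      rw [Finset.sum_comm' (t' := Finset.univ) (s' := fun _ => Finset.univ) (by simp)]
      conv_rhs => rw [Finset.sum_comm]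
      refine Finset.sum_congr rfl fun i _ => ?_
      rw [Finset.sum_comm]
    rw [e1, ← Finset.sum_sub_distrib]
    refine Finset.sum_congr rfl fun l _ => ?_
    rw [← Finset.sum_sub_distrib]
    refine Finset.sum_congr rfl fun i _ => ?_
    rw [← Finset.sum_sub_distrib]
    refine Finset.sum_congr rfl fun j _ => ?_
    simp only [ddq, hAdef, Matrix.sub_apply]
    ring
  refine le_of_le_of_eq ?_ hR.symm
  refine Finset.sum_le_sum fun l _ => ?_
  have hp := hG _ (hxl l).1
  have hm := hG _ (hxl l).2
  have e2 : ∑ i, ∑ j, newtonT m (A x) i j * ddq l h (fun y => A y i j) x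
      = (∑ i, ∑ j, newtonT m (A x) i j * A (x + h • (Pi.single l 1 : Fin n → ℝ)) i j
        - 2 * ∑ i, ∑ j, newtonT m (A x) i j * A x i j
        + ∑ i, ∑ j, newtonT m (A x) i j * A (x - h • (Pi.single l 1 : Fin n → ℝ)) i j)
          / h ^ 2 := by
    simp only [Finset.mul_sum, ← Finset.sum_sub_distrib, ← Finset.sum_add_distrib,
      Finset.sum_div]
    refine Finset.sum_congr rfl fun i _ => Finset.sum_congr rfl fun j _ => ?_
    simp only [ddq]
    ring
  rw [e2, hself]
  simp only [ddq]
  rw [mul_div_assoc']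
  have hh2 : 0 < h ^ 2 := by positivity
  refine div_le_div_of_nonneg_right ?_ hh2.le
  push_cast
  linarith
end

section
/- Discrete Bochner identity (Lemma 4.10). Let Ω ⊆ ℝⁿ be open, let H₁ : Ω×ℝ → ℝ be any function, let l ∈ {1,…,n} and h ≠ 0, and let x ∈ Ω be such that x, x+he_l, x−he_l ∈ Ω and u : Ω → ℝ is differentiable at x, x+he_l and x−he_l. Write H₁[u](y) := H₁(y,u(y)). Then Δ_{ll}^h(H₁[u]·|∇u|²)(x) = 2·H₁[u](x)·⟨∇u(x), Δ_{ll}^h(∇u)(x)⟩ + H₁[u](x−he_l)·|∇_l^{−h}(∇u)(x)|² + H₁[u](x+he_l)·|∇_l^{h}(∇u)(x)|² + ⟨∇_l^{−h}(∇u)(x), ∇u(x)⟩·∇_l^{−h}(H₁[u])(x) + ⟨∇_l^{h}(∇u)(x), ∇u(x)⟩·∇_l^{h}(H₁[u])(x) + ∇_l^h(Φ)(x), where Φ(y) := ⟨∇u(y), ∇u(y−he_l)⟩·∇_l^{−h}(H₁[u])(y). -/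
open MeasureTheory Metric Set Matrix

/-- Discrete Bochner identity (Lemma 4.10). -/
theorem discrete_bochner_identity
    {n : ℕ} (Ω : Set (Fin n → ℝ)) (hΩ : IsOpen Ω)
    (H₁ : ((Fin n → ℝ) × ℝ) → ℝ)
    (l : Fin n) (h : ℝ) (hh : h ≠ 0)
    (u : (Fin n → ℝ) → ℝ) (x : Fin n → ℝ)
    (hx : x ∈ Ω)
    (hxp : x + h • (Pi.single l 1 : Fin n → ℝ) ∈ Ω)
    (hxm : x - h • (Pi.single l 1 : Fin n → ℝ) ∈ Ω)
    (hux : DifferentiableAt ℝ u x)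
    (huxp : DifferentiableAt ℝ u (x + h • (Pi.single l 1 : Fin n → ℝ)))
    (huxm : DifferentiableAt ℝ u (x - h • (Pi.single l 1 : Fin n → ℝ))) :
    ddq l h (fun y => H₁ (y, u y) * normSq (grad u y)) x
      = 2 * H₁ (x, u x) * (∑ i, grad u x i * ddq l h (fun y => grad u y i) x)
        + H₁ (x - h • (Pi.single l 1 : Fin n → ℝ),
              u (x - h • (Pi.single l 1 : Fin n → ℝ))) *
            (∑ i, (dq l (-h) (fun y => grad u y i) x) ^ 2)
        + H₁ (x + h • (Pi.single l 1 : Fin n → ℝ),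
              u (x + h • (Pi.single l 1 : Fin n → ℝ))) *
            (∑ i, (dq l h (fun y => grad u y i) x) ^ 2)
        + (∑ i, dq l (-h) (fun y => grad u y i) x * grad u x i) *
            dq l (-h) (fun y => H₁ (y, u y)) x
        + (∑ i, dq l h (fun y => grad u y i) x * grad u x i) *
            dq l h (fun y => H₁ (y, u y)) x
        + dq l h (fun y =>
            (∑ i, grad u y i * grad u (y - h • (Pi.single l 1 : Fin n → ℝ)) i) *
              dq l (-h) (fun y' => H₁ (y', u y')) y) x := by
  have e1 : x + h • (Pi.single l 1 : Fin n → ℝ) - h • (Pi.single l 1 : Fin n → ℝ) = x := by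
    simp
  have e2 : x + h • (Pi.single l 1 : Fin n → ℝ) + (-h) • (Pi.single l 1 : Fin n → ℝ) = x := by
    simp
  have e3 : x + (-h) • (Pi.single l 1 : Fin n → ℝ) = x - h • (Pi.single l 1 : Fin n → ℝ) := by
    rw [neg_smul, sub_eq_add_neg]
  simp only [dq, ddq, normSq, e1, e2, e3]
  generalize x + h • (Pi.single l 1 : Fin n → ℝ) = p
  generalize x - h • (Pi.single l 1 : Fin n → ℝ) = m
  generalize grad u x = a
  generalize grad u p = b
  generalize grad u m = c
  generalize H₁ (x, u x) = A
  generalize H₁ (p, u p) = B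
  generalize H₁ (m, u m) = C
  have s1 : ∑ i, a i * ((b i - 2 * a i + c i) / h ^ 2)
      = (∑ i, b i * a i - 2 * ∑ i, a i ^ 2 + ∑ i, a i * c i) / h ^ 2 := by
    rw [Finset.mul_sum, ← Finset.sum_sub_distrib, ← Finset.sum_add_distrib, Finset.sum_div]
    exact Finset.sum_congr rfl fun i _ => by ring
  have s2 : ∑ i, ((c i - a i) / -h) ^ 2
      = (∑ i, c i ^ 2 - 2 * ∑ i, a i * c i + ∑ i, a i ^ 2) / h ^ 2 := by
    rw [Finset.mul_sum, ← Finset.sum_sub_distrib, ← Finset.sum_add_distrib, Finset.sum_div]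
    exact Finset.sum_congr rfl fun i _ => by rw [div_pow, neg_sq]; ring
  have s3 : ∑ i, ((b i - a i) / h) ^ 2
      = (∑ i, b i ^ 2 - 2 * ∑ i, b i * a i + ∑ i, a i ^ 2) / h ^ 2 := by
    rw [Finset.mul_sum, ← Finset.sum_sub_distrib, ← Finset.sum_add_distrib, Finset.sum_div]
    exact Finset.sum_congr rfl fun i _ => by rw [div_pow]; ring
  have s4 : ∑ i, (c i - a i) / -h * a i = (∑ i, a i * c i - ∑ i, a i ^ 2) / -h := by
    rw [← Finset.sum_sub_distrib, Finset.sum_div]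
    exact Finset.sum_congr rfl fun i _ => by ring
  have s5 : ∑ i, (b i - a i) / h * a i = (∑ i, b i * a i - ∑ i, a i ^ 2) / h := by
    rw [← Finset.sum_sub_distrib, Finset.sum_div]
    exact Finset.sum_congr rfl fun i _ => by ring
  rw [s1, s2, s3, s4, s5]
  field_simp
  ring
end

section
/- Integration-by-parts estimate for antisymmetric coefficient matrices (smooth core of Lemma 4.14). Let n ≥ 1 and let B : ℝⁿ → Mat_n(ℝ) be a C¹ matrix-valued function with compact support such that B(x) is antisymmetric (B(x)ᵀ = −B(x)) for every x. Then for every g ∈ C²(ℝⁿ) and h ∈ C¹(ℝⁿ), one has ∫_{ℝⁿ} Σ_{a,j} B(x)_{aj} ∂_a g(x) ∂_j h(x) dx = −∫_{ℝⁿ} Σ_a (div B)(x)_a ∂_a g(x) h(x) dx, and consequently |∫_{ℝⁿ} Σ_{a,j} B(x)_{aj} ∂_a g(x) ∂_j h(x) dx| ≤ ∫_{ℝⁿ} |div B(x)| |∇g(x)| |h(x)| dx, where (div B)_a := Σ_j ∂_j(B_{aj}). -/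
open MeasureTheory Metric Set Matrix

theorem pd_continuous_aux {n : ℕ} (i : Fin n) (w : (Fin n → ℝ) → ℝ) (hw : ContDiff ℝ 1 w) :
    Continuous (pd i w) :=
  (hw.continuous_fderiv one_ne_zero).clm_apply continuous_const

theorem pd_contDiff_aux {n : ℕ} (i : Fin n) (w : (Fin n → ℝ) → ℝ) (hw : ContDiff ℝ 2 w) :
    ContDiff ℝ 1 (pd i w) :=
  (hw.fderiv_right (m := 1) (by norm_num)).clm_apply contDiff_const

theorem pd_pd_symm_aux {n : ℕ} (i j : Fin n) (w : (Fin n → ℝ) → ℝ) (hw : ContDiff ℝ 2 w)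
    (x : Fin n → ℝ) : pd i (pd j w) x = pd j (pd i w) x := by
  have hd : DifferentiableAt ℝ (fderiv ℝ w) x :=
    ((hw.fderiv_right (m := 1) (by norm_num)).differentiable one_ne_zero) x
  have key : ∀ k l : Fin n, pd k (pd l w) x
      = fderiv ℝ (fderiv ℝ w) x (Pi.single k 1) (Pi.single l 1) := by
    intro k l
    have h1 := hd.hasFDerivAt.clm_apply
      (hasFDerivAt_const (Pi.single l (1 : ℝ) : Fin n → ℝ) x)
    have h2 : fderiv ℝ (pd l w) x = _ := h1.fderiv
    rw [pd, h2]
    simp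
  rw [key, key]
  exact (hw.contDiffAt.isSymmSndFDerivAt (by simp)) _ _

theorem pd_mul_aux {n : ℕ} (j : Fin n) (u v : (Fin n → ℝ) → ℝ) (hu : ContDiff ℝ 1 u)
    (hv : ContDiff ℝ 1 v) (x : Fin n → ℝ) :
    pd j (fun y => u y * v y) x = pd j u x * v x + u x * pd j v x := by
  have h1 := ((hu.differentiable one_ne_zero) x).hasFDerivAt.mul
    ((hv.differentiable one_ne_zero) x).hasFDerivAt
  have h2 : fderiv ℝ (fun y => u y * v y) x = _ := h1.fderiv
  rw [pd, h2]
  simp [pd]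
  ring

theorem pd_compact_aux {n : ℕ} (j : Fin n) (u : (Fin n → ℝ) → ℝ) (hu : HasCompactSupport u) :
    HasCompactSupport (pd j u) :=
  hu.fderiv_apply (𝕜 := ℝ) _

theorem ibp_aux {n : ℕ} (j : Fin n) (u h : (Fin n → ℝ) → ℝ) (hu : ContDiff ℝ 1 u)
    (huc : HasCompactSupport u) (hh : ContDiff ℝ 1 h) :
    ∫ x, u x * pd j h x = - ∫ x, pd j u x * h x := by
  refine integral_mul_fderiv_eq_neg_fderiv_mul_of_integrable ?_ ?_ ?_
    (fun x _ => (hu.differentiable one_ne_zero) x) (fun x _ => (hh.differentiable one_ne_zero) x)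
  · exact ((pd_continuous_aux j u hu).mul hh.continuous).integrable_of_hasCompactSupport
      (pd_compact_aux j u huc).mul_right
  · exact (hu.continuous.mul (pd_continuous_aux j h hh)).integrable_of_hasCompactSupport
      huc.mul_right
  · exact (hu.continuous.mul hh.continuous).integrable_of_hasCompactSupport huc.mul_right

/-- Integration-by-parts estimate for antisymmetric coefficient
matrices (smooth core of Lemma 4.14). -/
theorem antisymmetric_integration_by_parts
    {n : ℕ} (hn : 1 ≤ n)
    (B : (Fin n → ℝ) → Matrix (Fin n) (Fin n) ℝ)
    (hB : ∀ a j : Fin n, ContDiff ℝ 1 (fun x => B x a j))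
    (hBsupp : ∃ K : Set (Fin n → ℝ), IsCompact K ∧ ∀ x ∉ K, B x = 0)
    (hBanti : ∀ x, (B x)ᵀ = -B x)
    (g : (Fin n → ℝ) → ℝ) (hg : ContDiff ℝ 2 g)
    (h : (Fin n → ℝ) → ℝ) (hh : ContDiff ℝ 1 h) :
    (∫ x, ∑ a, ∑ j, B x a j * pd a g x * pd j h x)
        = -∫ x, ∑ a, (∑ j, pd j (fun y => B y a j) x) * pd a g x * h x ∧
    |∫ x, ∑ a, ∑ j, B x a j * pd a g x * pd j h x|
        ≤ ∫ x, vnorm (fun a => ∑ j, pd j (fun y => B y a j) x) * vnorm (grad g x) * |h x| := by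
  obtain ⟨K, hK, hK0⟩ := hBsupp
  have hBc : ∀ a j : Fin n, HasCompactSupport (fun x => B x a j) := fun a j =>
    HasCompactSupport.intro hK (fun x hx => by simp [hK0 x hx])
  have hg1 : ContDiff ℝ 1 g := hg.of_le (by norm_num)
  have hga : ∀ a, ContDiff ℝ 1 (pd a g) := fun a => pd_contDiff_aux a g hg
  have hu : ∀ a j : Fin n, ContDiff ℝ 1 (fun x => B x a j * pd a g x) := fun a j =>
    (hB a j).mul (hga a)
  have huc : ∀ a j : Fin n, HasCompactSupport (fun x => B x a j * pd a g x) := fun a j =>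
    (hBc a j).mul_right
  have hi1 : ∀ a j : Fin n, Integrable (fun x => B x a j * pd a g x * pd j h x) := fun a j =>
    ((hu a j).continuous.mul (pd_continuous_aux j h hh)).integrable_of_hasCompactSupport
      (huc a j).mul_right
  have hi2 : ∀ a j : Fin n, Integrable
      (fun x => pd j (fun y => B y a j * pd a g y) x * h x) := fun a j =>
    ((pd_continuous_aux j _ (hu a j)).mul hh.continuous).integrable_of_hasCompactSupport
      (pd_compact_aux j _ (huc a j)).mul_right
  have hanti : ∀ x a j, B x j a = - B x a j := fun x a j => by
    have := congrFun (congrFun (hBanti x) a) j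
    simpa using this
  have hzero : ∀ x, ∑ a, ∑ j, B x a j * pd j (pd a g) x = 0 := by
    intro x
    have h1 : ∑ a, ∑ j, B x a j * pd j (pd a g) x
        = - ∑ a, ∑ j, B x a j * pd j (pd a g) x := by
      conv_lhs => rw [Finset.sum_comm]
      rw [← Finset.sum_neg_distrib]
      refine Finset.sum_congr rfl fun a _ => ?_
      rw [← Finset.sum_neg_distrib]
      refine Finset.sum_congr rfl fun j _ => ?_
      rw [hanti x a j, pd_pd_symm_aux a j g hg x]
      ring
    linarith
  have hE : (∫ x, ∑ a, ∑ j, B x a j * pd a g x * pd j h x)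
        = -∫ x, ∑ a, (∑ j, pd j (fun y => B y a j) x) * pd a g x * h x := by
    have hR : (fun x => ∑ a, (∑ j, pd j (fun y => B y a j) x) * pd a g x * h x)
        = fun x => ∑ a, ∑ j, pd j (fun y => B y a j * pd a g y) x * h x := by
      funext x
      have h2 : ∀ a j, pd j (fun y => B y a j * pd a g y) x * h x
          = pd j (fun y => B y a j) x * pd a g x * h x
            + B x a j * pd j (pd a g) x * h x := fun a j => by
        rw [pd_mul_aux j _ _ (hB a j) (hga a) x]
        ring
      simp only [h2, Finset.sum_add_distrib, ← Finset.sum_mul, hzero x, zero_mul, add_zero]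
    rw [hR, integral_finsetSum _ (fun a _ => integrable_finsetSum _ fun j _ => hi1 a j),
      integral_finsetSum _ (fun a _ => integrable_finsetSum _ fun j _ => hi2 a j),
      ← Finset.sum_neg_distrib]
    refine Finset.sum_congr rfl fun a _ => ?_
    rw [integral_finsetSum _ (fun j _ => hi1 a j), integral_finsetSum _ (fun j _ => hi2 a j),
      ← Finset.sum_neg_distrib]
    exact Finset.sum_congr rfl fun j _ => ibp_aux j _ h (hu a j) (huc a j) hh
  refine ⟨hE, ?_⟩
  rw [hE, abs_neg, ← Real.norm_eq_abs]
  have hdc : ∀ a, Continuous (fun x => ∑ j, pd j (fun y => B y a j) x) := fun a =>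
    continuous_finsetSum _ fun j _ => pd_continuous_aux j _ (hB a j)
  refine norm_integral_le_of_norm_le ?_ (Filter.Eventually.of_forall fun x => ?_)
  · refine Continuous.integrable_of_hasCompactSupport ?_ ?_
    · refine Continuous.mul (Continuous.mul ?_ ?_) hh.continuous.abs
      · exact (continuous_finsetSum _ fun a _ => (hdc a).pow 2).sqrt
      · exact (continuous_finsetSum _ fun a _ => ((hga a).continuous).pow 2).sqrt
    · refine HasCompactSupport.intro hK fun x hx => ?_
      have h0 : ∀ a j, pd j (fun y => B y a j) x = 0 := by
        intro a j
        have hopen : IsOpen Kᶜ := hK.isClosed.isOpen_compl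
        have hev : (fun y => B y a j) =ᶠ[nhds x] fun _ => (0 : ℝ) := by
          filter_upwards [hopen.mem_nhds hx] with y hy
          simp [hK0 y hy]
        rw [pd, hev.fderiv_eq]
        simp
      simp [h0, vnorm]
  · rw [← Finset.sum_mul, norm_mul, Real.norm_eq_abs, Real.norm_eq_abs]
    refine mul_le_mul_of_nonneg_right ?_ (abs_nonneg _)
    unfold vnorm grad
    rw [← Real.sqrt_mul (Finset.sum_nonneg fun _ _ => sq_nonneg _)]
    exact Real.abs_le_sqrt (Finset.sum_mul_sq_le_sq_mul_sq _ _ _)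
end
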